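/- Let (T,f) be a Hubbard tree with kneading sequence ν and let ρ = ρ_ν. If z₁ is a tame characteristic branch point of exact period m, then m occurs in the internal address of ν and the number of arms of z₁ equals q(m). Conversely, for any entry m of the internal address of ν with q(m) ≥ 3, and such that the critical orbit is not periodic of period m, the Hubbard tree contains a tame branch point of exact period m with q(m) arms. -/

import Mathlib

/- Common definitions for formalizing "Admissibility of kneading sequences and
structure of Hubbard trees for quadratic polynomials" by Bruin–Schleicher. -/

namespace HubbardTrees

/-- The symbols `0`, `1`, `*` used for itineraries and kneading sequences. -/
inductive Sym : Type
  | zero : Sym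
  | one : Sym
  | star : Sym
deriving DecidableEq

/-- `A` is an arc in `X` joining `x` and `y` (a point if `x = y`, otherwise a
homeomorphic image of `[0,1]` with endpoints `x` and `y`). -/
def IsArcBetween {X : Type*} [TopologicalSpace X] (A : Set X) (x y : X) : Prop :=
  (x = y ∧ A = {x}) ∨
  (x ≠ y ∧ ∃ γ : Path x y, Topology.IsEmbedding ⇑γ ∧ Set.range ⇑γ = A)

/-- The global arms at `x`: the connected components of `X \ {x}`. -/
def arms {X : Type*} [TopologicalSpace X] (x : X) : Set (Set X) :=
  {C | ∃ y, y ≠ x ∧ C = connectedComponentIn {x}ᶜ y}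

/-- The global arm at `x` containing `y` (for `y ≠ x`): the component of `X \ {x}`
containing `y`.  Local arms at `x` being germs of global arms, we represent the local
arm at `x` pointing towards `y` by this set. -/
def armTo {X : Type*} [TopologicalSpace X] (x y : X) : Set X :=
  connectedComponentIn {x}ᶜ y

/-- `x` is an endpoint: it has exactly one arm. -/
def IsEndpoint {X : Type*} [TopologicalSpace X] (x : X) : Prop :=
  (arms x).ncard = 1

/-- `x` is a branch point: it has at least three arms. -/
def IsBranchPt {X : Type*} [TopologicalSpace X] (x : X) : Prop :=
  3 ≤ (arms x).ncard

/-- `f` maps the set `A` homeomorphically onto its image. -/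
def MapsHomeoOn {X : Type*} [TopologicalSpace X] (f : X → X) (A : Set X) : Prop :=
  Topology.IsEmbedding (A.restrict f)

/-- `f` is a local homeomorphism onto its image at `x`. -/
def IsLocalHomeoAt {X : Type*} [TopologicalSpace X] (f : X → X) (x : X) : Prop :=
  ∃ U : Set X, IsOpen U ∧ x ∈ U ∧ Topology.IsEmbedding (U.restrict f)

/-- `g` sends the local arm at `x` represented by the global arm `C` to the local
arm at `g x` represented by `C'` (germ condition: some initial piece of `C` at `x`
is mapped into `C'`). -/
def MapsLocalArm {X : Type*} [TopologicalSpace X] (g : X → X) (x : X) (C C' : Set X) : Prop :=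
  C ∈ arms x ∧ C' ∈ arms (g x) ∧ ∃ U ∈ nhds x, g '' (C ∩ U) ⊆ C'

/-- `z` is periodic under `f` with exact period `n`. -/
def ExactPeriod {Y : Type*} (f : Y → Y) (z : Y) (n : ℕ) : Prop :=
  1 ≤ n ∧ f^[n] z = z ∧ ∀ k, 1 ≤ k → k < n → f^[k] z ≠ z

/-- The first return map `f^[n]` of the fixed point `z` of `f^[n]` permutes all the
local arms at `z` transitively in a single cycle. -/
def ArmsTransitive {X : Type*} [TopologicalSpace X] (f : X → X) (n : ℕ) (z : X) : Prop :=
  ∀ C ∈ arms z, ∀ C' ∈ arms z, ∃ j : ℕ, MapsLocalArm (f^[n * j]) z C C'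

/-- An (abstract) Hubbard tree: a finite topological tree `X` together with a
continuous surjection `f` and a critical point `c0`, subject to the axioms of
Bruin–Schleicher. -/
structure HubbardTree (X : Type*) [TopologicalSpace X] : Type _ where
  /-- the dynamics -/
  f : X → X
  /-- the critical point -/
  c0 : X
  compact : CompactSpace X
  t2 : T2Space X
  conn : ConnectedSpace X
  /-- the unique arc `[x,y]` joining two points -/
  arc : X → X → Set X
  arc_isArc : ∀ x y : X, IsArcBetween (arc x y) x y
  arc_unique : ∀ (x y : X) (A : Set X), IsArcBetween A x y → A = arc x y
  -- finiteness of the tree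
  arms_finite : ∀ x : X, (arms x).Finite
  branch_finite : Set.Finite {x : X | IsBranchPt x}
  endpoint_finite : Set.Finite {x : X | IsEndpoint x}
  cont : Continuous f
  surj : Function.Surjective f
  /-- every point has at most two inverse images -/
  two_preimages : ∀ y : X, ∃ a b : X, f ⁻¹' {y} ⊆ {a, b}
  /-- local homeomorphism onto its image away from the critical point -/
  local_homeo : ∀ x : X, x ≠ c0 → IsLocalHomeoAt f x
  /-- all endpoints lie on the critical orbit -/
  endpoints_on_orbit : ∀ x : X, IsEndpoint x → ∃ k : ℕ, f^[k] c0 = x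
  /-- the critical point is periodic or preperiodic -/
  crit_preperiodic : ∃ k n : ℕ, 1 ≤ n ∧ f^[k + n] c0 = f^[k] c0
  /-- the critical point is not fixed -/
  crit_not_fixed : f c0 ≠ c0
  /-- expansivity -/
  expansive : ∀ x y : X, x ≠ y →
    (IsBranchPt x ∨ ∃ k : ℕ, f^[k] c0 = x) →
    (IsBranchPt y ∨ ∃ k : ℕ, f^[k] c0 = y) →
    ∃ n : ℕ, c0 ∈ f^[n] '' (arc x y)

namespace HubbardTree

variable {X : Type*} [TopologicalSpace X] (H : HubbardTree X)

/-- The critical value `c₁ = f(c₀)`. -/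
def c1 : X := H.f H.c0

/-- The component `T₁` of `T \ {c₀}` containing the critical value. -/
def T1 : Set X := connectedComponentIn {H.c0}ᶜ H.c1

open Classical in
/-- The symbol (`0`, `1` or `*`) attached to a point of the tree. -/
noncomputable def symOf (x : X) : Sym :=
  if x = H.c0 then Sym.star else if x ∈ H.T1 then Sym.one else Sym.zero

/-- The itinerary of `x`: a sequence of symbols, 1-indexed (the value at index `0`
is irrelevant); entry `k ≥ 1` is the symbol of `f^[k-1] x`. -/
noncomputable def itin (x : X) : ℕ → Sym :=
  fun k => H.symOf (H.f^[k - 1] x)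

/-- The kneading sequence: the itinerary of the critical value (1-indexed). -/
noncomputable def kneading : ℕ → Sym := H.itin H.c1

/-- `z` is the characteristic point of its periodic orbit: `c₁` lies in one
component of `X \ {z}` while `c₀` and all other points of the orbit lie in a
different component. -/
def IsCharacteristic (z : X) : Prop :=
  ∃ Cv Cz : Set X, Cv ∈ arms z ∧ Cz ∈ arms z ∧ Cv ≠ Cz ∧
    H.c1 ∈ Cv ∧ H.c0 ∈ Cz ∧ ∀ k : ℕ, H.f^[k] z ≠ z → H.f^[k] z ∈ Cz

/-- The first return map fixes the local arm at `z` pointing to the critical point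
and permutes all other local arms transitively in a single cycle. -/
def OtherArmsTransitive (n : ℕ) (z : X) : Prop :=
  ∀ C ∈ arms z, C ≠ armTo z H.c0 → ∀ C' ∈ arms z, C' ≠ armTo z H.c0 →
    ∃ j : ℕ, MapsLocalArm (H.f^[n * j]) z C C'

/-- `z` is the characteristic point of an evil periodic orbit of branch points of
exact period `n`. -/
def IsEvilOrbit (z : X) (n : ℕ) : Prop :=
  ExactPeriod H.f z n ∧ (∀ k : ℕ, IsBranchPt (H.f^[k] z)) ∧
    H.IsCharacteristic z ∧ ¬ ArmsTransitive H.f n z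

/-- `x` is precritical with `Step(x) = k`: `k ≥ 1` is minimal with `f^[k] x = c₁`. -/
def Step (x : X) (k : ℕ) : Prop :=
  1 ≤ k ∧ H.f^[k] x = H.c1 ∧ ∀ j, 1 ≤ j → j < k → H.f^[j] x ≠ H.c1

/-- `x` is the closest precritical point `ζ_k`. -/
def IsClosestPrecritical (x : X) (k : ℕ) : Prop :=
  H.Step x k ∧ ∀ j, 1 ≤ j → j < k → H.c1 ∉ H.f^[j] '' (H.arc H.c1 x)

/-- `x` is the earliest precritical point on the set `A`, with `Step(x) = k`:
it is a precritical point on `A` of minimal Step. -/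
def IsEarliestPrecriticalOn (A : Set X) (x : X) (k : ℕ) : Prop :=
  x ∈ A ∧ H.Step x k ∧ ∀ y ∈ A, ∀ j : ℕ, H.Step y j → k ≤ j

/-- Marked points: branch points and points of the critical orbit. -/
def MarkedPt (x : X) : Prop :=
  IsBranchPt x ∨ ∃ k : ℕ, H.f^[k] H.c0 = x

/-- Two marked points are joined by an edge if the arc between them contains no
further marked point. -/
def IsEdge (x y : X) : Prop :=
  H.MarkedPt x ∧ H.MarkedPt y ∧ x ≠ y ∧
    ∀ w ∈ H.arc x y, H.MarkedPt w → w = x ∨ w = y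

/-- Equivalence of Hubbard trees: a bijection between the marked points which
conjugates the dynamics and preserves edges. -/
def Equivalent {Y : Type*} [TopologicalSpace Y] (H' : HubbardTree Y) : Prop :=
  ∃ φ : X → Y,
    (∀ x : X, H.MarkedPt x → H'.MarkedPt (φ x)) ∧
    (∀ x x' : X, H.MarkedPt x → H.MarkedPt x' → φ x = φ x' → x = x') ∧
    (∀ y : Y, H'.MarkedPt y → ∃ x : X, H.MarkedPt x ∧ φ x = y) ∧
    φ H.c0 = H'.c0 ∧
    (∀ x : X, H.MarkedPt x → φ (H.f x) = H'.f (φ x)) ∧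
    (∀ x x' : X, H.MarkedPt x → H.MarkedPt x' →
      (H.IsEdge x x' ↔ H'.IsEdge (φ x) (φ x')))

end HubbardTree

/-! ### Combinatorics of kneading sequences -/

/-- The function `ρ_ν(n) = inf { k > n : ν_k ≠ ν_{k-n} } ∈ ℕ ∪ {∞}` (sequences are
1-indexed). -/
noncomputable def rho (ν : ℕ → Sym) (n : ℕ) : ℕ∞ :=
  sInf {e : ℕ∞ | ∃ j : ℕ, e = (j : ℕ∞) ∧ n < j ∧ ν j ≠ ν (j - n)}

/-- `RhoOrbit ν k m` means that `m` belongs to the `ρ`-orbit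
`k → ρ(k) → ρ(ρ(k)) → ⋯` of `k` (stopped before reaching `∞`). -/
inductive RhoOrbit (ν : ℕ → Sym) : ℕ → ℕ → Prop
  | refl (k : ℕ) : RhoOrbit ν k k
  | step {k m j : ℕ} : RhoOrbit ν k m → rho ν m = (j : ℕ∞) → RhoOrbit ν k j

/-- `m` occurs in the internal address `1 → ρ(1) → ρ(ρ(1)) → ⋯` of `ν`. -/
def InternalAddress (ν : ℕ → Sym) (m : ℕ) : Prop := RhoOrbit ν 1 m

/-- `ν` is a `*`-periodic kneading sequence of (exact) period `n`:
`ν = overline(1 ν₂ … ν_{n-1} *)`. -/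
def StarPeriodic (ν : ℕ → Sym) (n : ℕ) : Prop :=
  2 ≤ n ∧ ν 1 = Sym.one ∧ ν n = Sym.star ∧
    (∀ k, 1 ≤ k → ν (k + n) = ν k) ∧
    (∀ k, 1 ≤ k → k < n → ν k ≠ Sym.star)

/-- `ν` fails the admissibility condition for period `m`. -/
def FailsAdmissibility (ν : ℕ → Sym) (m : ℕ) : Prop :=
  1 ≤ m ∧
  ¬ InternalAddress ν m ∧
  (∀ k : ℕ, k ∣ m → 1 ≤ k → k < m → rho ν k ≤ (m : ℕ∞)) ∧
  ∃ R r : ℕ, rho ν m = (R : ℕ∞) ∧ 1 ≤ r ∧ r ≤ m ∧ r ≡ R [MOD m] ∧ RhoOrbit ν r m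

open Classical in
/-- The number `q(m)` of arms predicted by the kneading sequence, where
`ρ(m) = R < ∞` and `r ∈ {1,…,m}` is congruent to `R` modulo `m`. -/
noncomputable def qArms (ν : ℕ → Sym) (m R r : ℕ) : ℕ :=
  if RhoOrbit ν r m then (R - r) / m + 1 else (R - r) / m + 2


/-! ### Embeddings into the plane and cyclic order of arms -/

/-- Three points in the plane are in (strictly) counterclockwise position. -/
def Ccw (p q r : ℝ × ℝ) : Prop :=
  0 < (q.1 - p.1) * (r.2 - p.2) - (q.2 - p.2) * (r.1 - p.1)

namespace HubbardTree

variable {X : Type*} [TopologicalSpace X] (H : HubbardTree X)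

/-- Under an embedding `φ` of the tree into the plane, `p` is a first exit point of
the arm `C` at `x` through the circle of radius `ε` around `φ x`: `p = φ y` for a
point `y ∈ C` at distance exactly `ε`, such that the arc from `x` to `y` stays
within distance `< ε` before reaching `y`. -/
def ExitPt (φ : X → ℝ × ℝ) (x : X) (C : Set X) (ε : ℝ) (p : ℝ × ℝ) : Prop :=
  ∃ y ∈ C, φ y = p ∧ dist (φ x) p = ε ∧
    ∀ z ∈ H.arc x y, z ≠ y → dist (φ x) (φ z) < ε

/-- The local arms at `x` represented by the arms `C, C', C''` are in
counterclockwise cyclic order under the embedding `φ`. -/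
def ArmsCcw (φ : X → ℝ × ℝ) (x : X) (C C' C'' : Set X) : Prop :=
  ∃ ε₀ : ℝ, 0 < ε₀ ∧ ∀ ε : ℝ, 0 < ε → ε < ε₀ →
    ∀ p p' p'' : ℝ × ℝ, H.ExitPt φ x C ε p → H.ExitPt φ x C' ε p' →
      H.ExitPt φ x C'' ε p'' → Ccw p p' p''

/-- `f` respects the cyclic order (induced by the embedding `φ`) of the local arms
at all branch points. -/
def RespectsCyclicOrder (φ : X → ℝ × ℝ) : Prop :=
  ∀ x : X, IsBranchPt x →
    ∀ C C' C'' : Set X, C ∈ arms x → C' ∈ arms x → C'' ∈ arms x →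
      C ≠ C' → C' ≠ C'' → C ≠ C'' → H.ArmsCcw φ x C C' C'' →
      ∀ D D' D'' : Set X, MapsLocalArm H.f x C D → MapsLocalArm H.f x C' D' →
        MapsLocalArm H.f x C'' D'' → H.ArmsCcw φ (H.f x) D D' D''

/-- The Hubbard tree can be topologically embedded into the plane `ℝ²` so that `f`
respects the cyclic order of the local arms at all branch points. -/
def PlanarEmbeddable : Prop :=
  ∃ φ : X → ℝ × ℝ, Topology.IsEmbedding φ ∧ H.RespectsCyclicOrder φ

end HubbardTree


namespace HubbardTree
open Set

variable {X : Type*} [TopologicalSpace X] (H : HubbardTree X)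

theorem arc_of_inj {φ : ℝ → X} {a b : ℝ} (hab : a ≤ b) (hc : Continuous φ)
    (hi : InjOn φ (Icc a b)) : φ '' Icc a b = H.arc (φ a) (φ b) := by
  have := H.t2
  apply H.arc_unique
  rcases hab.eq_or_lt with rfl | hlt
  · left; simp
  · right
    refine ⟨fun h => hlt.ne (hi (left_mem_Icc.2 hab) (right_mem_Icc.2 hab) h), ?_⟩
    have hmem : ∀ t : unitInterval, a + (t : ℝ) * (b - a) ∈ Icc a b := by
      intro t
      have h0 := t.2.1
      have h1 := t.2.2
      constructor <;> nlinarith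
    let γ : Path (φ a) (φ b) :=
      { toFun := fun t => φ (a + (t : ℝ) * (b - a))
        continuous_toFun := by fun_prop
        source' := by simp
        target' := by simp }
    refine ⟨γ, ?_, ?_⟩
    · refine (Continuous.isClosedEmbedding γ.continuous ?_).isEmbedding
      intro s t hst
      have h := hi (hmem s) (hmem t) hst
      have h2 : (s : ℝ) * (b - a) = t * (b - a) := by linarith
      have h3 : (s : ℝ) = t := mul_right_cancel₀ (by linarith) h2
      exact Subtype.ext h3
    · ext w
      constructor
      · rintro ⟨t, rfl⟩
        exact ⟨_, hmem t, rfl⟩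
      · rintro ⟨s, hs, rfl⟩
        have hba : 0 < b - a := by linarith
        refine ⟨⟨(s - a) / (b - a), ?_, ?_⟩, ?_⟩
        · exact div_nonneg (by linarith [hs.1]) hba.le
        · rw [div_le_one hba]; linarith [hs.2]
        · change φ (a + (s - a) / (b - a) * (b - a)) = φ s
          congr 1
          field_simp
          ring

theorem exists_param (H : HubbardTree X) (x y : X) : ∃ (φ : ℝ → X) (b : ℝ), 0 ≤ b ∧ Continuous φ ∧
    InjOn φ (Icc 0 b) ∧ φ 0 = x ∧ φ b = y := by
  rcases H.arc_isArc x y with ⟨h, -⟩ | ⟨hne, γ, hγ, hr⟩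
  · exact ⟨fun _ => x, 0, le_rfl, continuous_const, by simp, rfl, h⟩
  · refine ⟨γ.extend, 1, zero_le_one, γ.continuous_extend, ?_, by simp, by simp⟩
    intro s hs t ht hst
    rw [Path.extend_apply _ hs, Path.extend_apply _ ht] at hst
    have := hγ.injective hst
    exact congrArg Subtype.val this

theorem left_mem (x y : X) : x ∈ H.arc x y := by
  obtain ⟨φ, b, hb, hc, hi, rfl, rfl⟩ := H.exists_param x y
  rw [← H.arc_of_inj hb hc hi]; exact ⟨0, ⟨le_rfl, hb⟩, rfl⟩

theorem right_mem (x y : X) : y ∈ H.arc x y := by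
  obtain ⟨φ, b, hb, hc, hi, rfl, rfl⟩ := H.exists_param x y
  rw [← H.arc_of_inj hb hc hi]; exact ⟨b, ⟨hb, le_rfl⟩, rfl⟩

theorem arc_self (x : X) : H.arc x x = {x} := by
  rw [← H.arc_unique x x {x} (Or.inl ⟨rfl, rfl⟩)]

theorem arc_comm (x y : X) : H.arc x y = H.arc y x := by
  obtain ⟨φ, b, hb, hc, hi, rfl, rfl⟩ := H.exists_param x y
  have h := H.arc_of_inj (φ := fun t => φ (b - t)) hb (by fun_prop) (by
    intro s hs t ht hst
    have := hi (x₁ := b - s) (x₂ := b - t) ⟨by linarith [hs.2], by linarith [hs.1]⟩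
      ⟨by linarith [ht.2], by linarith [ht.1]⟩ hst
    linarith)
  rw [← H.arc_of_inj hb hc hi]
  simp only [sub_self, sub_zero] at h
  rw [← h]
  ext w
  constructor
  · rintro ⟨s, hs, rfl⟩; exact ⟨b - s, ⟨by linarith [hs.2], by linarith [hs.1]⟩, by simp⟩
  · rintro ⟨s, hs, rfl⟩; exact ⟨b - s, ⟨by linarith [hs.2], by linarith [hs.1]⟩, by simp⟩

theorem arc_split {x y w : X} (hw : w ∈ H.arc x y) :
    H.arc x y = H.arc x w ∪ H.arc w y := by
  obtain ⟨φ, b, hb, hc, hi, rfl, rfl⟩ := H.exists_param x y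
  rw [← H.arc_of_inj hb hc hi] at hw ⊢
  obtain ⟨s, hs, rfl⟩ := hw
  rw [← H.arc_of_inj hs.1 hc (hi.mono (Icc_subset_Icc_right hs.2)),
    ← H.arc_of_inj hs.2 hc (hi.mono (Icc_subset_Icc_left hs.1)), ← image_union,
    Icc_union_Icc_eq_Icc hs.1 hs.2]

theorem arc_anti {x y w v : X} (hw : w ∈ H.arc x y) (h1 : v ∈ H.arc x w)
    (h2 : v ∈ H.arc w y) : v = w := by
  obtain ⟨φ, b, hb, hc, hi, rfl, rfl⟩ := H.exists_param x y
  rw [← H.arc_of_inj hb hc hi] at hw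
  obtain ⟨s, hs, rfl⟩ := hw
  rw [← H.arc_of_inj hs.1 hc (hi.mono (Icc_subset_Icc_right hs.2))] at h1
  rw [← H.arc_of_inj hs.2 hc (hi.mono (Icc_subset_Icc_left hs.1))] at h2
  obtain ⟨t, ht, rfl⟩ := h1
  obtain ⟨u, hu, h⟩ := h2
  have := hi (x₁ := u) (x₂ := t) ⟨by linarith [hu.1, hs.1], hu.2⟩ ⟨ht.1, by linarith [hs.2, ht.2]⟩ h
  congr 1
  linarith [hu.1, ht.2]

theorem sub_left {x y w : X} (hw : w ∈ H.arc x y) : H.arc x w ⊆ H.arc x y := by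
  rw [H.arc_split hw]; exact subset_union_left

theorem sub_right {x y w : X} (hw : w ∈ H.arc x y) : H.arc w y ⊆ H.arc x y := by
  rw [H.arc_split hw]; exact subset_union_right

theorem arc_sub {x y u v : X} (hu : u ∈ H.arc x y) (hv : v ∈ H.arc x y) :
    H.arc u v ⊆ H.arc x y := by
  rw [H.arc_split hu] at hv
  rcases hv with hv | hv
  · rw [H.arc_comm u v]
    exact (H.sub_right hv).trans (H.sub_left hu)
  · exact (H.sub_left hv).trans (H.sub_right hu)

theorem isCompact_arc (x y : X) : IsCompact (H.arc x y) := by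
  obtain ⟨φ, b, hb, hc, hi, rfl, rfl⟩ := H.exists_param x y
  rw [← H.arc_of_inj hb hc hi]
  exact isCompact_Icc.image hc

theorem isClosed_arc (x y : X) : IsClosed (H.arc x y) := by
  have := H.t2
  exact (H.isCompact_arc x y).isClosed

theorem isPreconnected_arc (x y : X) : IsPreconnected (H.arc x y) := by
  obtain ⟨φ, b, hb, hc, hi, rfl, rfl⟩ := H.exists_param x y
  rw [← H.arc_of_inj hb hc hi]
  exact isPreconnected_Icc.image _ hc.continuousOn

theorem arc_glue {x u v : X} (h : ∀ w ∈ H.arc x u, w ∈ H.arc u v → w = u) :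
    H.arc x v = H.arc x u ∪ H.arc u v := by
  obtain ⟨φ, b, hb, hc, hi, rfl, rfl⟩ := H.exists_param x u
  obtain ⟨ψ, d, hd, hc', hi', h0, rfl⟩ := H.exists_param (φ b) v
  have hA1 := H.arc_of_inj hb hc hi
  have hA2 := H.arc_of_inj hd hc' hi'
  rw [h0] at hA2
  rw [← hA1, ← hA2]
  rw [← hA1, ← hA2] at h
  clear hA1 hA2
  let χ : ℝ → X := fun t => if t ≤ b then φ t else ψ (t - b)
  have hχ : Continuous χ := by
    apply Continuous.if_le hc (by fun_prop) continuous_id continuous_const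
    rintro t rfl
    simp [h0]
  have e1 : χ 0 = φ 0 := by simp [χ, hb]
  have e2 : ∀ t, 0 ≤ t → χ (b + t) = ψ t := by
    intro t ht
    rcases ht.eq_or_lt with rfl | h1
    · simp [χ, h0]
    · simp [χ, h1]
  have e3 : ∀ t, t ≤ b → χ t = φ t := by
    intro t ht; simp [χ, ht]
  have e4 : ∀ t, b ≤ t → χ t = ψ (t - b) := by
    intro t ht
    have := e2 (t - b) (by linarith)
    rw [← this]; congr 1; ring
  have key : ∀ s t, 0 ≤ s → s ≤ b → b ≤ t → t ≤ b + d → χ s = χ t → s = t := by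
    intro s t hs0 hs ht htd hst
    rw [e3 s hs, e4 t ht] at hst
    have h5 := h (φ s) ⟨s, ⟨hs0, hs⟩, rfl⟩ ⟨t - b, ⟨by linarith, by linarith⟩, hst.symm⟩
    have h6 : t - b = 0 := hi' ⟨by linarith, by linarith⟩ ⟨le_rfl, hd⟩ (hst.symm.trans (h5.trans h0.symm))
    have h7 := hi ⟨hs0, hs⟩ ⟨hb, le_rfl⟩ h5
    linarith
  have hinj : InjOn χ (Icc 0 (b + d)) := by
    intro s hs t ht hst
    rcases le_total s b with h1 | h1 <;> rcases le_total t b with h2 | h2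
    · rw [e3 s h1, e3 t h2] at hst
      exact hi ⟨hs.1, h1⟩ ⟨ht.1, h2⟩ hst
    · exact key s t hs.1 h1 h2 ht.2 hst
    · exact (key t s ht.1 h2 h1 hs.2 hst.symm).symm
    · rw [e4 s h1, e4 t h2] at hst
      have := hi' ⟨by linarith, by linarith [hs.2]⟩ ⟨by linarith, by linarith [ht.2]⟩ hst
      linarith
  have h8 := H.arc_of_inj (by linarith) hχ hinj
  rw [e1, e2 d hd] at h8
  rw [← h8, ← Icc_union_Icc_eq_Icc hb (by linarith : b ≤ b + d), image_union]
  congr 1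
  · apply image_congr; intro t ht; exact e3 t ht.2
  · ext w
    constructor
    · rintro ⟨t, ht, rfl⟩
      exact ⟨t - b, ⟨by linarith [ht.1], by linarith [ht.2]⟩, (e4 t ht.1).symm⟩
    · rintro ⟨t, ht, rfl⟩
      exact ⟨b + t, ⟨by linarith [ht.1], by linarith [ht.2]⟩, e2 t ht.1⟩

theorem first_pt {x y : X} {S : Set X} (hS : IsClosed S) (hne : ∃ w ∈ H.arc x y, w ∈ S) :
    ∃ p ∈ H.arc x y, p ∈ S ∧ ∀ w ∈ H.arc x p, w ∈ S → w = p := by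
  obtain ⟨φ, b, hb, hc, hi, rfl, rfl⟩ := H.exists_param x y
  rw [← H.arc_of_inj hb hc hi] at *
  have hcomp : IsCompact (Icc 0 b ∩ φ ⁻¹' S) :=
    isCompact_Icc.inter_right (hS.preimage hc)
  obtain ⟨w, ⟨t, ht, rfl⟩, hw⟩ := hne
  obtain ⟨s, ⟨hs1, hs2⟩, hmin⟩ := hcomp.exists_isLeast ⟨t, ht, hw⟩
  refine ⟨φ s, ⟨s, hs1, rfl⟩, hs2, ?_⟩
  rw [← H.arc_of_inj hs1.1 hc (hi.mono (Icc_subset_Icc_right hs1.2))]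
  rintro _ ⟨u, hu, rfl⟩ huS
  have := hmin ⟨⟨hu.1, hu.2.trans hs1.2⟩, huS⟩
  congr 1
  linarith [hu.2]

theorem exists_median (x y v : X) : ∃ p, p ∈ H.arc x y ∧ p ∈ H.arc y v ∧ p ∈ H.arc x v ∧
    H.arc x v = H.arc x p ∪ H.arc p v := by
  obtain ⟨p, h1, h2, h3⟩ := H.first_pt (x := x) (y := y) (H.isClosed_arc y v)
    ⟨y, H.right_mem _ _, H.left_mem _ _⟩
  have h4 : H.arc x v = H.arc x p ∪ H.arc p v := by
    apply H.arc_glue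
    intro w hw hw'
    exact h3 w hw (H.sub_right h2 hw')
  refine ⟨p, h1, h2, ?_, h4⟩
  rw [h4]; exact Or.inl (H.right_mem _ _)

theorem arc_tri (x y v : X) : H.arc x v ⊆ H.arc x y ∪ H.arc y v := by
  obtain ⟨p, h1, h2, h3, h4⟩ := H.exists_median x y v
  rw [h4]
  exact union_subset_union (H.sub_left h1) (H.sub_right h2)

/-- `w` separates `x, y` or lies at one of them -/
theorem sep_tri {x y v w : X} (h : w ∈ H.arc x v) : w ∈ H.arc x y ∨ w ∈ H.arc y v :=
  H.arc_tri x y v h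

theorem exists_ne_mem_nhds {x y : X} (hxy : x ≠ y) {U : Set X} (hU : U ∈ nhds x) :
    ∃ p ∈ H.arc x y, p ≠ x ∧ H.arc x p ⊆ U := by
  obtain ⟨φ, b, hb, hc, hi, rfl, rfl⟩ := H.exists_param x y
  have hb0 : 0 < b := by
    rcases hb.eq_or_lt with rfl | h
    · exact absurd rfl hxy
    · exact h
  have h1 : φ ⁻¹' U ∈ nhds (0 : ℝ) := hc.continuousAt hU
  obtain ⟨ε, hε, hb1⟩ := Metric.mem_nhds_iff.1 h1
  have hs : 0 < min (ε / 2) b := by positivity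
  set s := min (ε / 2) b with hsdef
  have hsb : s ≤ b := min_le_right _ _
  have hse : s ≤ ε / 2 := min_le_left _ _
  refine ⟨φ s, ?_, ?_, ?_⟩
  · rw [← H.arc_of_inj hb hc hi]; exact ⟨s, ⟨hs.le, hsb⟩, rfl⟩
  · intro h
    exact hs.ne' (hi ⟨hs.le, hsb⟩ ⟨le_rfl, hb⟩ h)
  · rw [← H.arc_of_inj hs.le hc (hi.mono (Icc_subset_Icc_right hsb))]
    rintro _ ⟨t, ht, rfl⟩
    apply hb1
    rw [Metric.mem_ball, Real.dist_eq, sub_zero, abs_of_nonneg ht.1]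
    linarith [ht.2]

theorem isPreconnected_arc_diff_left (x y : X) : IsPreconnected (H.arc x y \ {x}) := by
  obtain ⟨φ, b, hb, hc, hi, rfl, rfl⟩ := H.exists_param x y
  have : H.arc (φ 0) (φ b) \ {φ 0} = φ '' Ioc 0 b := by
    rw [← H.arc_of_inj hb hc hi]
    ext w
    constructor
    · rintro ⟨⟨t, ht, rfl⟩, h⟩
      refine ⟨t, ⟨lt_of_le_of_ne ht.1 ?_, ht.2⟩, rfl⟩
      rintro rfl; exact h rfl
    · rintro ⟨t, ht, rfl⟩
      refine ⟨⟨t, ⟨ht.1.le, ht.2⟩, rfl⟩, ?_⟩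
      intro h
      exact ht.1.ne' (hi ⟨ht.1.le, ht.2⟩ ⟨le_rfl, hb⟩ h)
  rw [this]
  exact isPreconnected_Ioc.image _ hc.continuousOn

theorem exists_between {x y : X} (hxy : x ≠ y) : ∃ p ∈ H.arc x y, p ≠ x ∧ p ≠ y := by
  have := H.t2
  obtain ⟨p, hp, h1, h2⟩ := H.exists_ne_mem_nhds hxy (isOpen_ne.mem_nhds hxy : {z | z ≠ y} ∈ nhds x)
  exact ⟨p, hp, h1, h2 (H.right_mem x p)⟩

end HubbardTree

namespace HubbardTree
open Set

variable {X : Type*} [TopologicalSpace X] (H : HubbardTree X)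

theorem self_mem_armTo {x y : X} (h : y ≠ x) : y ∈ armTo x y :=
  mem_connectedComponentIn h

theorem not_mem_armTo {x y : X} : x ∉ armTo x y := fun h =>
  (connectedComponentIn_subset _ _ h) rfl

theorem armTo_mem {x y : X} (h : y ≠ x) : armTo x y ∈ arms x := ⟨y, h, rfl⟩

theorem armTo_eq_of_mem {x y w : X} (h : w ∈ armTo x y) : armTo x y = armTo x w :=
  connectedComponentIn_eq h

theorem mem_armTo_of (H : HubbardTree X) {x y w : X} (h : x ∉ H.arc y w) : w ∈ armTo x y := by
  refine (H.isPreconnected_arc y w).subset_connectedComponentIn (H.left_mem _ _) ?_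
    (H.right_mem _ _)
  intro v hv hvx
  exact h (by rwa [mem_singleton_iff.1 hvx] at hv)

theorem arm_eq_armTo {x w : X} {C : Set X} (hC : C ∈ arms x) (hw : w ∈ C) :
    w ≠ x ∧ C = armTo x w := by
  obtain ⟨y, hy, rfl⟩ := hC
  exact ⟨connectedComponentIn_subset _ _ hw, connectedComponentIn_eq hw⟩

theorem arm_nonempty {x : X} {C : Set X} (hC : C ∈ arms x) : C.Nonempty := by
  obtain ⟨y, hy, rfl⟩ := hC
  exact ⟨y, self_mem_armTo hy⟩

theorem closure_arm {x : X} {C : Set X} (hC : C ∈ arms x) : closure C ⊆ C ∪ {x} := by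
  obtain ⟨y, hy, rfl⟩ := hC
  intro w hw
  by_cases hwx : w = x
  · exact Or.inr hwx
  · left
    have h1 : IsPreconnected (insert w (connectedComponentIn {x}ᶜ y)) := by
      refine isPreconnected_connectedComponentIn.subset_closure (subset_insert _ _) ?_
      exact insert_subset hw subset_closure
    refine h1.subset_connectedComponentIn (mem_insert_of_mem _ (mem_connectedComponentIn hy)) ?_
      (mem_insert _ _)
    exact insert_subset hwx (connectedComponentIn_subset _ _)

theorem isOpen_arm (H : HubbardTree X) {x : X} {C : Set X} (hC : C ∈ arms x) : IsOpen C := by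
  have := H.t2
  have h1 : IsClosed (({x} : Set X) ∪ ⋃ D ∈ (arms x \ {C}), closure D) := by
    refine isClosed_singleton.union ?_
    exact ((H.arms_finite x).subset sdiff_subset).isClosed_biUnion (fun _ _ => isClosed_closure)
  have h2 : C = (({x} : Set X) ∪ ⋃ D ∈ (arms x \ {C}), closure D)ᶜ := by
    ext w
    constructor
    · intro hw hw'
      obtain ⟨hwx, hCw⟩ := arm_eq_armTo hC hw
      rcases hw' with h | h
      · exact hwx h
      · simp only [mem_iUnion] at h
        obtain ⟨D, hD, hwD⟩ := h
        rcases closure_arm hD.1 hwD with h | h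
        · exact hD.2 ((arm_eq_armTo hD.1 h).2.trans hCw.symm)
        · exact hwx h
    · intro hw
      by_contra hwC
      apply hw
      by_cases hwx : w = x
      · exact Or.inl hwx
      · right
        simp only [mem_iUnion]
        refine ⟨armTo x w, ⟨armTo_mem hwx, ?_⟩, subset_closure (self_mem_armTo hwx)⟩
        rintro h
        rw [← mem_singleton_iff.1 h] at hwC
        exact hwC (self_mem_armTo hwx)
  rw [h2]
  exact h1.isOpen_compl

theorem arc_diff_sub_armTo (H : HubbardTree X) {x y : X} (h : y ≠ x) : H.arc x y \ {x} ⊆ armTo x y := by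
  refine (H.isPreconnected_arc_diff_left x y).subset_connectedComponentIn
    ⟨H.right_mem _ _, h⟩ ?_
  intro w hw; exact hw.2

theorem exists_endpoint (o p : X) : p = o ∨ ∃ e, IsEndpoint e ∧ p ∈ H.arc o e := by
  by_contra hp0
  have := H.compact
  let K : Set X := {p | p = o ∨ ∃ e, IsEndpoint e ∧ p ∈ H.arc o e}
  change p ∉ K at hp0
  let W : X → Set X := fun q => (armTo q o)ᶜ
  have hKo : ∀ q, q ∉ K → o ≠ q := fun q hq h => hq (Or.inl h.symm)
  have hself : ∀ q, q ∈ W q := fun q => not_mem_armTo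
  have hother : ∀ q, q ∉ K → ∃ q' ∈ W q, q' ≠ q := by
    intro q hq
    have hne : ¬ IsEndpoint q := fun h => hq (Or.inr ⟨q, h, H.right_mem _ _⟩)
    by_contra hcon
    push Not at hcon
    apply hne
    have : arms q = {armTo q o} := by
      ext C
      constructor
      · intro hC
        obtain ⟨w, hw⟩ := arm_nonempty hC
        obtain ⟨hwq, rfl⟩ := arm_eq_armTo hC hw
        have : w ∈ armTo q o := by
          by_contra h
          exact hwq (hcon w h)
        exact (armTo_eq_of_mem this).symm
      · rintro rfl
        exact armTo_mem (hKo q hq)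
    unfold IsEndpoint
    rw [this, ncard_singleton]
  have hclaim : ∀ q, q ∉ K → ∀ q' ∈ W q, q' ≠ q → q' ∉ K ∧ W q' ⊆ W q ∧ q ∉ W q' := by
    intro q hq q' hq' hne
    have hpre : IsPreconnected (armTo q o ∪ H.arc o q) :=
      IsPreconnected.union o (self_mem_armTo (hKo q hq)) (H.left_mem _ _)
        isPreconnected_connectedComponentIn (H.isPreconnected_arc _ _)
    have hsub : armTo q o ∪ H.arc o q ⊆ armTo q' o := by
      refine hpre.subset_connectedComponentIn (Or.inr (H.left_mem _ _)) ?_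
      rintro w hw rfl
      rcases hw with h | h
      · exact hq' h
      · rw [H.arc_comm] at h
        exact hq' (H.arc_diff_sub_armTo (hKo q hq) ⟨h, hne⟩)
    refine ⟨?_, ?_, ?_⟩
    · rintro (h | ⟨e, he, hmem⟩)
      · subst h; exact hq' (self_mem_armTo (hKo q hq))
      · apply hq
        refine Or.inr ⟨e, he, ?_⟩
        apply H.sub_left hmem
        by_contra hcon
        exact hq' (H.mem_armTo_of hcon)
    · exact compl_subset_compl.2 (subset_union_left.trans hsub)
    · intro h; exact h (hsub (Or.inr (H.right_mem _ _)))
  obtain ⟨M, hM⟩ := zorn_superset (W '' Kᶜ) (by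
    intro c hc hchain
    rcases c.eq_empty_or_nonempty with rfl | hne
    · exact ⟨W p, ⟨p, hp0, rfl⟩, by simp⟩
    · have hcl : ∀ s ∈ c, IsClosed s := by
        intro s hs
        obtain ⟨q, hq, rfl⟩ := hc hs
        exact (H.isOpen_arm (armTo_mem (hKo q hq))).isClosed_compl
      obtain ⟨q, hq⟩ := IsCompact.nonempty_sInter_of_directed_nonempty_isCompact_isClosed
        (S := c) (hS := hne.to_subtype) (by
          intro a ha b hb
          rcases eq_or_ne a b with rfl | hab
          · exact ⟨a, ha, subset_rfl, subset_rfl⟩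
          rcases hchain ha hb hab with h | h
          · exact ⟨a, ha, subset_rfl, h⟩
          · exact ⟨b, hb, h, subset_rfl⟩) (by
          intro s hs
          obtain ⟨q, hq, rfl⟩ := hc hs
          exact ⟨q, hself q⟩) (fun s hs => (hcl s hs).isCompact) hcl
      have hqK : q ∉ K := by
        obtain ⟨s, hs⟩ := hne
        have hqs := hq s hs
        obtain ⟨q', hq', rfl⟩ := hc hs
        rcases eq_or_ne q q' with rfl | h
        · exact hq'
        · exact (hclaim q' hq' q hqs h).1
      refine ⟨W q, ⟨q, hqK, rfl⟩, ?_⟩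
      intro s hs
      have hqs := hq s hs
      obtain ⟨q', hq', rfl⟩ := hc hs
      rcases eq_or_ne q q' with rfl | h
      · exact subset_rfl
      · exact (hclaim q' hq' q hqs h).2.1)
  obtain ⟨q, hq, rfl⟩ := hM.prop
  obtain ⟨q', hq', hne⟩ := hother q hq
  obtain ⟨h1, h2, h3⟩ := hclaim q hq q' hq' hne
  exact h3 (hM.le_of_le ⟨q', h1, rfl⟩ h2 (hself q))

theorem sep_closed {x : X} {P : Set X} 
    (hP : ∀ v ∈ P, ∀ w, x ∉ H.arc v w → w ∈ P) : IsClosed (insert x P) := by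
  have hfin : Set.Finite {e : X | IsEndpoint e ∧ e ∈ P} :=
    H.endpoint_finite.subset fun e he => he.1
  have h1 : insert x P = {x} ∪ ⋃ e ∈ {e : X | IsEndpoint e ∧ e ∈ P}, H.arc x e := by
    ext v
    constructor
    · rintro (rfl | hv)
      · exact Or.inl rfl
      · rcases H.exists_endpoint x v with h | ⟨e, he, hve⟩
        · exact Or.inl h
        · by_cases hvx : v = x
          · exact Or.inl hvx
          right
          simp only [mem_iUnion]
          refine ⟨e, ⟨he, hP v hv e ?_⟩, hve⟩
          intro h
          exact hvx (H.arc_anti hve (H.left_mem _ _) h).symm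
    · rintro (rfl | hv)
      · exact mem_insert _ _
      · simp only [mem_iUnion] at hv
        obtain ⟨e, ⟨he, heP⟩, hve⟩ := hv
        by_cases hvx : v = x
        · exact Or.inl hvx
        right
        refine hP e heP v ?_
        intro h
        rw [H.arc_comm] at h
        exact hvx (H.arc_anti hve (H.left_mem _ _) h).symm
  rw [h1]
  have := H.t2
  exact isClosed_singleton.union (hfin.isClosed_biUnion fun e _ => H.isClosed_arc x e)

theorem mem_armTo_iff {x y w : X} (hy : y ≠ x) : w ∈ armTo x y ↔ x ∉ H.arc y w := by
  refine ⟨?_, H.mem_armTo_of⟩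
  intro hw
  let P : Set X := {v | x ∉ H.arc y v}
  let Q : Set X := {v | v ≠ x ∧ x ∈ H.arc y v}
  have hP : IsClosed (insert x P) := by
    apply H.sep_closed
    intro v hv w hw h
    rcases H.sep_tri (y := v) h with h | h
    · exact hv h
    · exact hw h
  have hQ : IsClosed (insert x Q) := by
    apply H.sep_closed
    rintro v ⟨hv, hv'⟩ w hw
    refine ⟨?_, ?_⟩
    · rintro rfl; exact hw (H.right_mem _ _)
    · rcases H.sep_tri (y := w) hv' with h | h
      · exact h
      · rw [H.arc_comm] at h; exact absurd h hw
  have hPo : P = (insert x Q)ᶜ := by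
    ext v
    by_cases hvx : v = x
    · subst hvx; simp [P, Q, H.right_mem]
    · simp [P, Q, hvx]
  have hQo : Q = (insert x P)ᶜ := by
    ext v
    by_cases hvx : v = x
    · subst hvx; simp [P, Q]
    · simp [P, Q, hvx]
  have h1 : armTo x y ⊆ P := by
    refine IsPreconnected.subset_left_of_subset_union (v := Q) ?_ ?_ ?_ ?_ ?_
      isPreconnected_connectedComponentIn
    · rw [hPo]; exact hQ.isOpen_compl
    · rw [hQo]; exact hP.isOpen_compl
    · rw [disjoint_left]; intro v hv hv'; exact hv hv'.2
    · intro v hv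
      have hvx : v ≠ x := connectedComponentIn_subset _ _ hv
      by_cases h : x ∈ H.arc y v
      · exact Or.inr ⟨hvx, h⟩
      · exact Or.inl h
    · refine ⟨y, self_mem_armTo hy, ?_⟩
      change x ∉ H.arc y y
      rw [H.arc_self]; exact fun h => hy h.symm
  exact h1 hw

theorem armTo_eq_iff {x y w : X} (hy : y ≠ x) (hw : w ≠ x) :
    armTo x y = armTo x w ↔ x ∉ H.arc y w := by
  rw [← H.mem_armTo_iff hy]
  constructor
  · intro h; rw [h]; exact self_mem_armTo hw
  · exact armTo_eq_of_mem

theorem armTo_ne_iff {x y w : X} (hy : y ≠ x) (hw : w ≠ x) :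
    armTo x y ≠ armTo x w ↔ x ∈ H.arc y w := by
  rw [Ne, H.armTo_eq_iff hy hw, not_not]

theorem isClosed_behind (x w : X) : IsClosed {v | w ∈ H.arc x v} := by
  by_cases h : x = w
  · subst h
    simp [H.left_mem]
  · have : {v | w ∈ H.arc x v} = (armTo w x)ᶜ := by
      ext v
      simp [H.mem_armTo_iff h]
    rw [this]
    exact (H.isOpen_arm (armTo_mem h)).isClosed_compl

theorem isBranch_of {x a b c : X} (ha : a ≠ x) (hb : b ≠ x) (hc : c ≠ x)
    (hab : x ∈ H.arc a b) (hac : x ∈ H.arc a c) (hbc : x ∈ H.arc b c) : IsBranchPt x := by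
  have h : ({armTo x a, armTo x b, armTo x c} : Set (Set X)).ncard = 3 := by
    rw [ncard_eq_three]
    exact ⟨_, _, _, (H.armTo_ne_iff ha hb).2 hab, (H.armTo_ne_iff ha hc).2 hac,
      (H.armTo_ne_iff hb hc).2 hbc, rfl⟩
  unfold IsBranchPt
  rw [← h]
  apply ncard_le_ncard _ (H.arms_finite x)
  rintro C (rfl | rfl | rfl)
  · exact armTo_mem ha
  · exact armTo_mem hb
  · exact armTo_mem hc

theorem exists_endpoint_arm (H : HubbardTree X) {x : X} {C : Set X} (hC : C ∈ arms x) :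
    ∃ e, IsEndpoint e ∧ e ≠ x ∧ C = armTo x e := by
  obtain ⟨y, hy⟩ := arm_nonempty hC
  obtain ⟨hyx, rfl⟩ := arm_eq_armTo hC hy
  rcases H.exists_endpoint x y with h | ⟨e, he, hye⟩
  · exact absurd h hyx
  · have hex : e ≠ x := by
      rintro rfl
      rw [H.arc_self] at hye
      exact hyx hye
    refine ⟨e, he, hex, ?_⟩
    rw [H.armTo_eq_iff hyx hex]
    intro h
    exact hyx (H.arc_anti hye (H.left_mem _ _) h).symm

theorem star_nhd {z : X} {U₀ : Set X} (hU : U₀ ∈ nhds z) :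
    ∃ U ∈ nhds z, ∀ w ∈ U, H.arc z w ⊆ U₀ := by
  have hex : ∀ e : X, ∃ p, e ≠ z → p ∈ H.arc z e ∧ p ≠ z ∧ H.arc z p ⊆ U₀ := by
    intro e
    by_cases h : e = z
    · exact ⟨z, fun h' => absurd h h'⟩
    · obtain ⟨p, h1, h2, h3⟩ := H.exists_ne_mem_nhds (Ne.symm h) hU
      exact ⟨p, fun _ => ⟨h1, h2, h3⟩⟩
  choose p hp using hex
  let E : Set X := {e | IsEndpoint e} \ {z}
  have hE : E.Finite := H.endpoint_finite.subset sdiff_subset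
  refine ⟨⋂ e ∈ E, (H.arc (p e) e)ᶜ, ?_, ?_⟩
  · rw [Filter.biInter_mem hE]
    intro e he
    apply (H.isClosed_arc _ _).isOpen_compl.mem_nhds
    intro h
    obtain ⟨h1, h2, h3⟩ := hp e he.2
    exact h2 (H.arc_anti h1 (H.left_mem _ _) h).symm
  · intro w hw
    rcases H.exists_endpoint z w with rfl | ⟨e, he, hwe⟩
    · rw [H.arc_self, singleton_subset_iff]; exact mem_of_mem_nhds hU
    · by_cases hez : e = z
      · subst hez
        rw [H.arc_self] at hwe
        rw [mem_singleton_iff.1 hwe, H.arc_self, singleton_subset_iff]; exact mem_of_mem_nhds hU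
      obtain ⟨h1, h2, h3⟩ := hp e hez
      simp only [mem_iInter] at hw
      have h4 := hw e ⟨he, hez⟩
      rw [H.arc_split h1] at hwe
      rcases hwe with h | h
      · exact (H.sub_left h).trans h3
      · exact absurd h h4

end HubbardTree

namespace HubbardTree
open Set

variable {X : Type*} [TopologicalSpace X] (H : HubbardTree X)

theorem local_inj {x : X} (hx : x ≠ H.c0) : ∃ U ∈ nhds x, InjOn H.f U := by
  obtain ⟨U, hU, hxU, hemb⟩ := H.local_homeo x hx
  exact ⟨U, hU.mem_nhds hxU, injOn_iff_injective.2 hemb.injective⟩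

theorem locinj_mono {g : ℝ → X} {a b : ℝ} (hg : Continuous g)
    (hloc : ∀ t ∈ Icc a b, ∃ ε > 0, InjOn g (Icc (t - ε) (t + ε) ∩ Icc a b)) :
    ∀ s ∈ Icc a b, g s ∈ H.arc (g a) (g b) := by
  intro s hs
  have hab : a ≤ b := hs.1.trans hs.2
  let S : Set ℝ := {u | ∀ s ∈ Icc a b, u ≤ s ∨ g s ∈ H.arc (g a) (g u)}
  have hS : IsClosed S := by
    have : S = ⋂ s ∈ Icc a b, (Iic s ∪ g ⁻¹' {v | g s ∈ H.arc (g a) v}) := by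
      ext u; simp only [mem_iInter]; rfl
    rw [this]
    exact isClosed_biInter fun s _ => isClosed_Iic.union ((H.isClosed_behind _ _).preimage hg)
  have hsub : Icc a b ⊆ S := by
    apply IsClosed.Icc_subset_of_forall_exists_gt (hS.inter isClosed_Icc)
    · intro s hs; exact Or.inl hs.1
    · rintro u ⟨hu, hua, hub⟩ y hy
      obtain ⟨ε, hε, hinj⟩ := hloc u ⟨hua, hub.le⟩
      have hyu : u < y := hy
      set u' := min (u + ε) (min y b) with hu'
      have h1 : u < u' := by simp [hu', hε, hyu, hub]
      have h2 : u' ≤ u + ε := min_le_left _ _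
      have h3 : u' ≤ y := (min_le_right _ _).trans (min_le_left _ _)
      have h4 : u' ≤ b := (min_le_right _ _).trans (min_le_right _ _)
      set s0 := max a (u - ε) with hs0
      have h5 : s0 ≤ u := by simp [hs0, hua, hε.le]
      have h6 : a ≤ s0 := le_max_left _ _
      have h7 : u - ε ≤ s0 := le_max_right _ _
      have hI : InjOn g (Icc s0 u') := hinj.mono (by
        intro t ht
        exact ⟨⟨h7.trans ht.1, ht.2.trans h2⟩, h6.trans ht.1, ht.2.trans h4⟩)
      have harc := H.arc_of_inj (h5.trans h1.le) hg hI
      have harc2 := H.arc_of_inj h1.le hg (hI.mono (Icc_subset_Icc_left h5))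
      have hu1 : g u ∈ H.arc (g s0) (g u') := by rw [← harc]; exact ⟨u, ⟨h5, h1.le⟩, rfl⟩
      have key : g u ∈ H.arc (g a) (g u') := by
        rcases hu s0 ⟨h6, h5.trans hub.le⟩ with h | h
        · have : s0 = u := le_antisymm h5 h
          have hau : a = u := by
            rcases max_choice a (u - ε) with h' | h'
            · rw [← this, hs0, h']
            · rw [← hs0, this] at h'; linarith
          rw [hau]; exact H.left_mem _ _
        · rcases eq_or_ne s0 u with he | hne
          · have hau : a = u := by
              rcases max_choice a (u - ε) with h' | h'
              · rw [← he, hs0, h']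
              · rw [← hs0, he] at h'; linarith
            rw [hau]; exact H.left_mem _ _
          have hgne : g u ≠ g s0 := fun h' =>
            hne (hI ⟨le_rfl, h5.trans h1.le⟩ ⟨h5, h1.le⟩ h'.symm)
          rcases H.sep_tri (y := g a) hu1 with h8 | h8
          · rw [H.arc_comm] at h8
            exact absurd (H.arc_anti h h8 (H.right_mem _ _)) hgne
          · exact h8
      refine ⟨u', ⟨?_, h1, h3⟩⟩
      intro t ht
      rcases le_or_gt u' t with h9 | h9
      · exact Or.inl h9
      right
      rcases le_or_gt t u with h10 | h10
      · rcases hu t ht with h11 | h11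
        · rw [le_antisymm h10 h11]; exact key
        · exact H.sub_left key h11
      · apply H.sub_right key
        rw [← harc2]
        exact ⟨t, ⟨h10.le, h9.le⟩, rfl⟩
  rcases hsub (right_mem_Icc.2 hab) s hs with h | h
  · rw [le_antisymm h hs.2]; exact H.right_mem _ _
  · exact h

theorem inj_arc {x y : X} (h : ∀ w ∈ H.arc x y, w ≠ x → w ≠ y → w ≠ H.c0) :
    InjOn H.f (H.arc x y) ∧ H.f '' H.arc x y = H.arc (H.f x) (H.f y) := by
  obtain ⟨φ, b, hb, hc, hi, rfl, rfl⟩ := H.exists_param x y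
  have harc := H.arc_of_inj hb hc hi
  let g : ℝ → X := fun t => H.f (φ t)
  have hg : Continuous g := H.cont.comp hc
  have hloc : ∀ t ∈ Ioo 0 b, ∃ ε > 0, InjOn g (Icc (t - ε) (t + ε) ∩ Icc 0 b) := by
    intro t ht
    have hne : φ t ≠ H.c0 := by
      apply h
      · rw [← harc]; exact ⟨t, Ioo_subset_Icc_self ht, rfl⟩
      · intro h'; exact ht.1.ne' (hi (Ioo_subset_Icc_self ht) ⟨le_rfl, hb⟩ h')
      · intro h'; exact ht.2.ne (hi (Ioo_subset_Icc_self ht) ⟨hb, le_rfl⟩ h')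
    obtain ⟨U, hU, hinj⟩ := H.local_inj hne
    obtain ⟨ε, hε, hb1⟩ := Metric.mem_nhds_iff.1 (hc.continuousAt hU)
    refine ⟨ε / 2, by positivity, ?_⟩
    have hmem : ∀ s ∈ Icc (t - ε / 2) (t + ε / 2), φ s ∈ U := by
      intro s hs
      apply hb1
      rw [Metric.mem_ball, Real.dist_eq, abs_lt]
      constructor <;> linarith [hs.1, hs.2]
    intro s hs s' hs' hss
    exact hi hs.2 hs'.2 (hinj (hmem s hs.1) (hmem s' hs'.1) hss)
  have hm1 : ∀ a s d, 0 < a → a ≤ s → s ≤ d → d < b → g s ∈ H.arc (g a) (g d) := by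
    intro a s d ha has hsd hdb
    refine H.locinj_mono (a := a) (b := d) hg ?_ s ⟨has, hsd⟩
    intro t ht
    obtain ⟨ε, hε, hinj⟩ := hloc t ⟨by linarith [ht.1], by linarith [ht.2]⟩
    exact ⟨ε, hε, hinj.mono (inter_subset_inter_right _ (Icc_subset_Icc ha.le hdb.le))⟩
  have hm2 : ∀ a s d, 0 < a → a ≤ s → s < d → d ≤ b → g s ∈ H.arc (g a) (g d) := by
    intro a s d ha has hsd hdb
    have hcl : IsClosed (g ⁻¹' {v | g s ∈ H.arc (g a) v}) := (H.isClosed_behind _ _).preimage hg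
    have h1 : Ico s d ⊆ g ⁻¹' {v | g s ∈ H.arc (g a) v} := fun t ht =>
      hm1 a s t ha has ht.1 (ht.2.trans_le hdb)
    have h2 := closure_minimal h1 hcl
    rw [closure_Ico hsd.ne] at h2
    exact h2 ⟨hsd.le, le_rfl⟩
  have hm3 : ∀ a s d, 0 ≤ a → a < s → s < d → d ≤ b → g s ∈ H.arc (g a) (g d) := by
    intro a s d ha has hsd hdb
    have hcl : IsClosed (g ⁻¹' {v | g s ∈ H.arc (g d) v}) := (H.isClosed_behind _ _).preimage hg
    have h1 : Ioc a s ⊆ g ⁻¹' {v | g s ∈ H.arc (g d) v} := fun t ht => by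
      change g s ∈ H.arc (g d) (g t)
      rw [H.arc_comm]
      exact hm2 t s d (ha.trans_lt ht.1) ht.2 hsd hdb
    have h2 := closure_minimal h1 hcl
    rw [closure_Ioc has.ne] at h2
    have := h2 ⟨le_rfl, has.le⟩
    rw [H.arc_comm]
    exact this
  have hlt : ∀ u v, 0 ≤ u → u < v → v ≤ b → g u ≠ g v := by
    intro u v hu huv hv huv'
    have hconst : ∀ s, u < s → s < v → g s = g u := by
      intro s hs1 hs2
      have := hm3 u s v hu hs1 hs2 hv
      rw [← huv', H.arc_self] at this
      exact this
    obtain ⟨ε, hε, hinj⟩ := hloc ((u + v) / 2) ⟨by linarith, by linarith⟩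
    have hs : (u + v) / 2 < min ((u + v) / 2 + ε) ((u + 3 * v) / 4) := by
      rw [lt_min_iff]; constructor <;> linarith
    set s := min ((u + v) / 2 + ε) ((u + 3 * v) / 4) with hsd
    have hs1 : s ≤ (u + v) / 2 + ε := min_le_left _ _
    have hs2 : s ≤ (u + 3 * v) / 4 := min_le_right _ _
    have := hinj (x₁ := s) (x₂ := (u + v) / 2) ⟨⟨by linarith, hs1⟩, by linarith, by linarith⟩
      ⟨⟨by linarith, by linarith⟩, by linarith, by linarith⟩
      ((hconst s (by linarith) (by linarith)).trans (hconst _ (by linarith) (by linarith)).symm)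
    linarith
  have hginj : InjOn g (Icc 0 b) := by
    intro u hu v hv huv
    rcases lt_trichotomy u v with h1 | h1 | h1
    · exact absurd huv (hlt u v hu.1 h1 hv.2)
    · exact h1
    · exact absurd huv.symm (hlt v u hv.1 h1 hu.2)
  have harc' := H.arc_of_inj hb hg hginj
  constructor
  · rw [← harc]
    rintro _ ⟨s, hs, rfl⟩ _ ⟨t, ht, rfl⟩ hst
    rw [hginj hs ht hst]
  · rw [← harc, ← image_comp]
    exact harc'

/-- no interior point of the arc hits `c0` before time `n` -/
def Clr (n : ℕ) (x y : X) : Prop :=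
  ∀ k < n, ∀ w ∈ H.arc x y, w ≠ x → w ≠ y → H.f^[k] w ≠ H.c0

/-- no point of the arc hits `c0` before time `n` -/
def NH (n : ℕ) (x y : X) : Prop :=
  ∀ k < n, ∀ w ∈ H.arc x y, H.f^[k] w ≠ H.c0

variable {H}

theorem NH.clr {n : ℕ} {x y : X} (h : H.NH n x y) : H.Clr n x y :=
  fun k hk w hw _ _ => h k hk w hw

theorem Clr.mono {n k : ℕ} {x y : X} (h : H.Clr n x y) (hk : k ≤ n) : H.Clr k x y :=
  fun j hj => h j (hj.trans_le hk)

theorem NH.mono {n k : ℕ} {x y : X} (h : H.NH n x y) (hk : k ≤ n) : H.NH k x y :=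
  fun j hj => h j (hj.trans_le hk)

theorem NH.sub {n : ℕ} {x y u v : X} (h : H.NH n x y) (hu : u ∈ H.arc x y) (hv : v ∈ H.arc x y) :
    H.NH n u v :=
  fun k hk w hw => h k hk w (H.arc_sub hu hv hw)

theorem NH.symm {n : ℕ} {x y : X} (h : H.NH n x y) : H.NH n y x := by
  unfold NH; rw [H.arc_comm]; exact h

theorem Clr.symm {n : ℕ} {x y : X} (h : H.Clr n x y) : H.Clr n y x := by
  unfold Clr; rw [H.arc_comm]; exact fun k hk w hw h1 h2 => h k hk w hw h2 h1

theorem Clr.inj {n : ℕ} {x y : X} (h : H.Clr n x y) :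
    InjOn H.f^[n] (H.arc x y) ∧ H.f^[n] '' H.arc x y = H.arc (H.f^[n] x) (H.f^[n] y) := by
  induction n with
  | zero => simp [InjOn]
  | succ n ih =>
    obtain ⟨h1, h2⟩ := ih (h.mono (Nat.le_succ n))
    have h3 := H.inj_arc (x := H.f^[n] x) (y := H.f^[n] y) (by
      rw [← h2]
      rintro _ ⟨w, hw, rfl⟩ hx hy
      refine h n (Nat.lt_succ_self n) w hw ?_ ?_
      · rintro rfl; exact hx rfl
      · rintro rfl; exact hy rfl)
    constructor
    · intro u hu v hv huv
      rw [Function.iterate_succ_apply', Function.iterate_succ_apply'] at huv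
      refine h1 hu hv (h3.1 ?_ ?_ huv)
      · rw [← h2]; exact ⟨u, hu, rfl⟩
      · rw [← h2]; exact ⟨v, hv, rfl⟩
    · rw [Function.iterate_succ', image_comp, h2, h3.2]; rfl

theorem Clr.injOn {n : ℕ} {x y : X} (h : H.Clr n x y) : InjOn H.f^[n] (H.arc x y) := h.inj.1

theorem Clr.img {n : ℕ} {x y : X} (h : H.Clr n x y) :
    H.f^[n] '' H.arc x y = H.arc (H.f^[n] x) (H.f^[n] y) := h.inj.2

theorem Clr.mem {n : ℕ} {x y w : X} (h : H.Clr n x y) (hw : w ∈ H.arc x y) :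
    H.f^[n] w ∈ H.arc (H.f^[n] x) (H.f^[n] y) := by
  rw [← h.img]; exact ⟨w, hw, rfl⟩

theorem Clr.add {n k : ℕ} {x y : X} (h : H.Clr n x y) (h' : H.Clr k (H.f^[n] x) (H.f^[n] y)) :
    H.Clr (n + k) x y := by
  intro j hj w hw hx hy hc
  rcases lt_or_ge j n with h1 | h1
  · exact h j h1 w hw hx hy hc
  · obtain ⟨i, rfl⟩ := Nat.exists_eq_add_of_le h1
    rw [add_comm, Function.iterate_add_apply] at hc
    refine h' i (by omega) _ (h.mem hw) ?_ ?_ hc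
    · intro h2; exact hx (h.injOn hw (H.left_mem _ _) h2)
    · intro h2; exact hy (h.injOn hw (H.right_mem _ _) h2)

theorem NH.add {n k : ℕ} {x y : X} (h : H.NH n x y) (h' : H.NH k (H.f^[n] x) (H.f^[n] y)) :
    H.NH (n + k) x y := by
  intro j hj w hw hc
  rcases lt_or_ge j n with h1 | h1
  · exact h j h1 w hw hc
  · obtain ⟨i, rfl⟩ := Nat.exists_eq_add_of_le h1
    rw [add_comm, Function.iterate_add_apply] at hc
    exact h' i (by omega) _ (h.clr.mem hw) hc

variable (H)

/-- first point (from `x`) hitting `c0` before time `n` -/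
theorem first_hit_pt {n : ℕ} {x y : X} (h : ¬ H.NH n x y) :
    ∃ p ∈ H.arc x y, ∃ k < n, H.f^[k] p = H.c0 ∧
      ∀ j < n, ∀ w ∈ H.arc x p, w ≠ p → H.f^[j] w ≠ H.c0 := by
  have := H.t2
  have hcl : IsClosed (⋃ k ∈ Iio n, H.f^[k] ⁻¹' {H.c0}) :=
    (finite_Iio n).isClosed_biUnion fun k _ => isClosed_singleton.preimage (H.cont.iterate k)
  unfold NH at h
  push Not at h
  obtain ⟨k, hk, w, hw, hwc⟩ := h
  obtain ⟨p, h1, h2, h3⟩ := H.first_pt (x := x) (y := y) hcl ⟨w, hw, by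
    simp only [mem_iUnion]; exact ⟨k, hk, hwc⟩⟩
  simp only [mem_iUnion] at h2
  obtain ⟨k', hk', hp⟩ := h2
  refine ⟨p, h1, k', hk', hp, ?_⟩
  intro j hj v hv hvp hc
  apply hvp
  apply h3 v hv
  simp only [mem_iUnion]
  exact ⟨j, hj, hc⟩

/-- first time hitting `c0` -/
theorem first_hit_time {n : ℕ} {x y : X} (h : ¬ H.NH n x y) :
    ∃ k < n, H.NH k x y ∧ ∃ p ∈ H.arc x y, H.f^[k] p = H.c0 ∧
      (∀ w ∈ H.arc x y, H.f^[k] w = H.c0 → w = p) ∧ H.Clr (k + 1) x p ∧ H.Clr (k + 1) p y := by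
  classical
  have hex : ∃ k, ∃ w ∈ H.arc x y, H.f^[k] w = H.c0 := by
    unfold NH at h
    push Not at h
    obtain ⟨k, hk, w, hw, hwc⟩ := h
    exact ⟨k, w, hw, hwc⟩
  have hNH : H.NH (Nat.find hex) x y := by
    intro j hj w hw hc
    exact Nat.find_min hex hj ⟨w, hw, hc⟩
  refine ⟨Nat.find hex, ?_, hNH, ?_⟩
  · by_contra hcon
    exact h (hNH.mono (not_lt.1 hcon))
  · obtain ⟨p, hp, hpc⟩ := Nat.find_spec hex
    have huq : ∀ w ∈ H.arc x y, H.f^[Nat.find hex] w = H.c0 → w = p :=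
      fun w hw hwc => hNH.clr.injOn hw hp (hwc.trans hpc.symm)
    refine ⟨p, hp, hpc, huq, ?_, ?_⟩
    · intro j hj w hw hwx hwp hc
      have hw' := H.sub_left hp hw
      rcases Nat.lt_succ_iff_lt_or_eq.1 hj with h1 | rfl
      · exact hNH j h1 w hw' hc
      · exact hwp (huq w hw' hc)
    · intro j hj w hw hwp hwx hc
      have hw' := H.sub_right hp hw
      rcases Nat.lt_succ_iff_lt_or_eq.1 hj with h1 | rfl
      · exact hNH j h1 w hw' hc
      · exact hwp (huq w hw' hc)

end HubbardTree

namespace HubbardTree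
open Set

variable {X : Type*} [TopologicalSpace X] (H : HubbardTree X)

theorem clr_one_of {x y : X} (h : H.c0 ∈ H.arc x y → H.c0 = x ∨ H.c0 = y) : H.Clr 1 x y := by
  intro k hk w hw hx hy hc
  obtain rfl : k = 0 := by omega
  simp only [Function.iterate_zero, id] at hc
  subst hc
  rcases h hw with h | h
  · exact hx h
  · exact hy h

theorem c1_unique {x : X} (h : H.f x = H.c1) : x = H.c0 := by
  have h1 := (H.clr_one_of (x := H.c0) (y := x) (fun _ => Or.inl rfl)).injOn
  exact h1 (H.right_mem _ _) (H.left_mem _ _) h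

open Classical in
/-- truncation of the target `a` at `c0`, seen from `x` -/
noncomputable def tp (x a : X) : X := if H.c0 ∈ H.arc x a then H.c0 else a

theorem tp_mem (x a : X) : H.tp x a ∈ H.arc x a := by
  unfold tp; split_ifs with h
  · exact h
  · exact H.right_mem _ _

theorem tp_ne {x a : X} (hx : x ≠ H.c0) (ha : a ≠ x) : H.tp x a ≠ x := by
  unfold tp; split_ifs with h
  · exact hx.symm
  · exact ha

theorem tp_c0 {x a : X} (h : H.c0 ∈ H.arc x (H.tp x a)) : H.c0 = H.tp x a := by
  unfold tp at *
  split_ifs at * with h1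
  · rfl
  · exact absurd h h1

theorem tp_clr (x a : X) : H.Clr 1 x (H.tp x a) :=
  H.clr_one_of fun h => Or.inr (H.tp_c0 h)

/-- arms do not change when moving the target along the arc -/
theorem arm_along {x a t : X} (ht : t ∈ H.arc x a) (htx : t ≠ x) : armTo x t = armTo x a := by
  have hax : a ≠ x := by
    rintro rfl; rw [H.arc_self] at ht; exact htx ht
  rw [H.armTo_eq_iff htx hax]
  intro h
  exact htx (H.arc_anti ht (H.left_mem _ _) h).symm

theorem sep_along {x a b a' b' : X} (h : x ∈ H.arc a b) (ha : a' ∈ H.arc x a)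
    (hb : b' ∈ H.arc x b) : x ∈ H.arc a' b' := by
  by_cases h1 : a' = x
  · rw [h1]; exact H.left_mem _ _
  by_cases h2 : b' = x
  · rw [h2]; exact H.right_mem _ _
  have h3 : a ≠ x := by
    rintro rfl; rw [H.arc_self] at ha; exact h1 ha
  have h4 : b ≠ x := by
    rintro rfl; rw [H.arc_self] at hb; exact h2 hb
  rw [← H.armTo_ne_iff h1 h2, H.arm_along ha h1, H.arm_along hb h2, H.armTo_ne_iff h3 h4]
  exact h

theorem push_sep {x a b : X} (hx : x ≠ H.c0) (ha : a ≠ x) (hb : b ≠ x) (h : x ∈ H.arc a b) :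
    H.f x ∈ H.arc (H.f (H.tp x a)) (H.f (H.tp x b)) ∧ H.f (H.tp x a) ≠ H.f x ∧
      H.f (H.tp x b) ≠ H.f x := by
  have hm : x ∈ H.arc (H.tp x a) (H.tp x b) := H.sep_along h (H.tp_mem _ _) (H.tp_mem _ _)
  have hc : H.Clr 1 (H.tp x a) (H.tp x b) := by
    apply H.clr_one_of
    intro h
    rw [H.arc_split hm] at h
    rcases h with h | h
    · rw [H.arc_comm] at h; exact Or.inl (H.tp_c0 h)
    · exact Or.inr (H.tp_c0 h)
  refine ⟨hc.mem hm, ?_, ?_⟩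
  · intro h; exact H.tp_ne hx ha (hc.injOn (H.left_mem _ _) hm h)
  · intro h; exact H.tp_ne hx hb (hc.injOn (H.right_mem _ _) hm h)

theorem endpoint_end {e x y : X} (he : IsEndpoint e) (h : e ∈ H.arc x y) : e = x ∨ e = y := by
  by_contra hcon
  push Not at hcon
  obtain ⟨C, hC⟩ := ncard_eq_one.1 he
  have h1 : armTo e x ∈ arms e := armTo_mem hcon.1.symm
  have h2 : armTo e y ∈ arms e := armTo_mem hcon.2.symm
  rw [hC] at h1 h2
  exact (H.armTo_ne_iff hcon.1.symm hcon.2.symm).2 h (h1.trans h2.symm)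

theorem c1_end {x y : X} (h : H.c1 ∈ H.arc x y) : H.c1 = x ∨ H.c1 = y := by
  classical
  have hex : ∃ k, ∀ x y, H.f^[k + 1] H.c0 ∈ H.arc x y → H.f^[k + 1] H.c0 = x ∨ H.f^[k + 1] H.c0 = y := by
    rcases H.exists_endpoint H.c0 H.c1 with h | ⟨e, he, h⟩
    · exact absurd h H.crit_not_fixed
    · have hne : e ≠ H.c0 := by
        rintro rfl; rw [H.arc_self] at h; exact H.crit_not_fixed h
      obtain ⟨k, hk⟩ := H.endpoints_on_orbit e he
      cases k with
      | zero => exact absurd hk.symm hne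
      | succ k => exact ⟨k, fun x y hxy => by rw [hk] at *; exact H.endpoint_end he hxy⟩
  have hspec := Nat.find_spec hex
  have hmin := @Nat.find_min _ _ hex
  generalize Nat.find hex = k at *
  cases k with
  | zero => exact hspec x y h
  | succ k =>
    exfalso
    have h1 := hmin (Nat.lt_succ_self k)
    by_cases hc : H.f^[k + 1] H.c0 = H.c0
    · refine hmin (m := 0) (Nat.succ_pos k) ?_
      have : H.f^[k + 1 + 1] H.c0 = H.f^[0 + 1] H.c0 := by
        rw [Function.iterate_succ_apply', hc]; rfl
      rw [this] at hspec
      exact hspec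
    · push Not at h1
      obtain ⟨a, b, hab, ha, hb⟩ := h1
      obtain ⟨h2, h3, h4⟩ := H.push_sep hc ha.symm hb.symm hab
      rw [← Function.iterate_succ_apply' (f := H.f)] at h2 h3 h4
      rcases hspec _ _ h2 with h | h
      · exact h3 h.symm
      · exact h4 h.symm

theorem c0_two {a b d : X} (ha : a ≠ H.c0) (hb : b ≠ H.c0) (hd : d ≠ H.c0)
    (hab : H.c0 ∈ H.arc a b) (hbd : H.c0 ∈ H.arc b d) (had : H.c0 ∈ H.arc a d) : False := by
  have key : ∀ x y, x ≠ H.c0 → y ≠ H.c0 → ∃ p ∈ H.arc H.c1 (H.f x), p ∈ H.arc H.c1 (H.f y) ∧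
      p ≠ H.c1 := by
    intro x y hx hy
    obtain ⟨p, h1, h2, h3, -⟩ := H.exists_median H.c1 (H.f x) (H.f y)
    refine ⟨p, h1, h3, ?_⟩
    rintro rfl
    rcases H.c1_end h2 with h | h
    · exact hx (H.c1_unique h.symm)
    · exact hy (H.c1_unique h.symm)
  have hu : ∃ u, u ∈ H.arc H.c1 (H.f a) ∧ u ∈ H.arc H.c1 (H.f b) ∧ u ∈ H.arc H.c1 (H.f d) ∧
      u ≠ H.c1 := by
    obtain ⟨p, p1, p2, p3⟩ := key a b ha hb
    obtain ⟨q, q1, q2, q3⟩ := key a d ha hd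
    have hq := q1
    rw [H.arc_split p1] at q1
    rcases q1 with h | h
    · exact ⟨q, hq, H.sub_left p2 h, q2, q3⟩
    · refine ⟨p, p1, p2, ?_, p3⟩
      refine H.sub_left q2 ?_
      rw [H.arc_split p1] at hq
      by_contra hcon
      obtain ⟨p', h1, h2, h3, -⟩ := H.exists_median H.c1 p q
      have : p' = p := H.arc_anti p1 h1 (H.sub_left h h2)
      rw [this] at h3; exact hcon h3
  obtain ⟨u, ua, ub, ud, uc⟩ := hu
  have pre : ∀ x, u ∈ H.arc H.c1 (H.f x) → ∃ v ∈ H.arc H.c0 x, H.f v = u ∧ v ≠ H.c0 := by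
    intro x hux
    have h1 := (H.clr_one_of (x := H.c0) (y := x) (fun _ => Or.inl rfl)).img
    change H.f '' _ = H.arc H.c1 (H.f x) at h1
    rw [← h1] at hux
    obtain ⟨v, hv, rfl⟩ := hux
    refine ⟨v, hv, rfl, ?_⟩
    rintro rfl
    exact uc rfl
  obtain ⟨va, a1, a2, a3⟩ := pre a ua
  obtain ⟨vb, b1, b2, b3⟩ := pre b ub
  obtain ⟨vd, d1, d2, d3⟩ := pre d ud
  have ne : ∀ {x y v w : X}, H.c0 ∈ H.arc x y → v ∈ H.arc H.c0 x → w ∈ H.arc H.c0 y → v ≠ H.c0 →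
      v ≠ w := by
    rintro x y v _ h hv hw hne rfl
    have := H.sep_along h hv hw
    rw [H.arc_self] at this
    exact hne this.symm
  have nab := ne hab a1 b1 a3
  have nbd := ne hbd b1 d1 b3
  have nad := ne had a1 d1 a3
  obtain ⟨s, t, hst⟩ := H.two_preimages u
  have e1 := hst (show va ∈ _ from a2)
  have e2 := hst (show vb ∈ _ from b2)
  have e3 := hst (show vd ∈ _ from d2)
  simp only [mem_insert_iff, mem_singleton_iff] at e1 e2 e3
  rcases e1 with rfl | rfl <;> rcases e2 with rfl | rfl <;> rcases e3 with rfl | rfl <;> contradiction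

theorem symOf_star {x : X} : H.symOf x = Sym.star ↔ x = H.c0 := by
  unfold symOf
  split_ifs <;> simp_all

theorem symOf_eq_iff {x y : X} (hx : x ≠ H.c0) (hy : y ≠ H.c0) :
    H.symOf x = H.symOf y ↔ H.c0 ∉ H.arc x y := by
  have hc : H.c1 ≠ H.c0 := H.crit_not_fixed
  have hT : ∀ w, w ∈ H.T1 ↔ H.c0 ∉ H.arc H.c1 w := fun w => H.mem_armTo_iff hc
  unfold symOf
  simp only [hx, hy, if_false]
  have hTx := hT x
  have hTy := hT y
  have h1 : H.c0 ∈ H.arc H.c1 x → H.c0 ∈ H.arc H.c1 y → H.c0 ∉ H.arc x y := fun h1 h2 h3 =>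
    H.c0_two hc hx hy h1 h3 h2
  have h2 : H.c0 ∈ H.arc x y → H.c0 ∈ H.arc H.c1 x ∨ H.c0 ∈ H.arc H.c1 y := by
    intro h
    rcases H.sep_tri (y := H.c1) h with h | h
    · rw [H.arc_comm] at h; exact Or.inl h
    · exact Or.inr h
  have h3 : H.c0 ∈ H.arc H.c1 x → H.c0 ∈ H.arc H.c1 y ∨ H.c0 ∈ H.arc x y := by
    intro h
    rcases H.sep_tri (y := y) h with h | h
    · exact Or.inl h
    · rw [H.arc_comm] at h; exact Or.inr h
  have h4 : H.c0 ∈ H.arc H.c1 y → H.c0 ∈ H.arc H.c1 x ∨ H.c0 ∈ H.arc x y := fun h =>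
    H.sep_tri (y := x) h
  split_ifs <;> simp <;> tauto

theorem branch_three {x : X} (h : IsBranchPt x) : ∃ a b d, a ≠ x ∧ b ≠ x ∧ d ≠ x ∧
    armTo x a ≠ armTo x b ∧ armTo x a ≠ armTo x d ∧ armTo x b ≠ armTo x d := by
  have h' : 2 < (arms x).ncard := h
  rw [two_lt_ncard_iff (finite_of_ncard_pos (by omega))] at h'
  obtain ⟨A, B, D, ⟨a, ha, rfl⟩, ⟨b, hb, rfl⟩, ⟨d, hd, rfl⟩, h1, h2, h3⟩ := h'
  exact ⟨a, b, d, ha, hb, hd, h1, h2, h3⟩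

theorem branch_ne_c0 {x : X} (h : IsBranchPt x) : x ≠ H.c0 := by
  rintro rfl
  obtain ⟨a, b, d, ha, hb, hd, h1, h2, h3⟩ := branch_three h
  rw [H.armTo_ne_iff (by assumption) (by assumption)] at h1 h2 h3
  exact H.c0_two ha hb hd h1 h3 h2

theorem branch_image {x : X} (h : IsBranchPt x) : IsBranchPt (H.f x) := by
  have hx := H.branch_ne_c0 h
  obtain ⟨a, b, d, ha, hb, hd, h1, h2, h3⟩ := branch_three h
  rw [H.armTo_ne_iff (by assumption) (by assumption)] at h1 h2 h3
  obtain ⟨p1, p2, p3⟩ := H.push_sep hx ha hb h1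
  obtain ⟨q1, q2, q3⟩ := H.push_sep hx ha hd h2
  obtain ⟨r1, r2, r3⟩ := H.push_sep hx hb hd h3
  exact H.isBranch_of p2 p3 q3 p1 q1 r1

theorem branch_iter {x : X} (h : IsBranchPt x) (k : ℕ) : IsBranchPt (H.f^[k] x) := by
  induction k with
  | zero => exact h
  | succ k ih => rw [Function.iterate_succ_apply']; exact H.branch_image ih

theorem branch_avoid {x : X} (h : IsBranchPt x) (k : ℕ) : H.f^[k] x ≠ H.c0 :=
  H.branch_ne_c0 (H.branch_iter h k)

/-! ### local arms -/

theorem _root_.HubbardTrees.MapsLocalArm.unique (H : HubbardTree X) {g : X → X} {x : X} {C D D' : Set X}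
    (h : MapsLocalArm g x C D) (h' : MapsLocalArm g x C D') : D = D' := by
  obtain ⟨hC, hD, U, hU, hs⟩ := h
  obtain ⟨-, hD', U', hU', hs'⟩ := h'
  obtain ⟨y, hy⟩ := arm_nonempty hC
  obtain ⟨hyx, rfl⟩ := arm_eq_armTo hC hy
  obtain ⟨p, hp, hpx, hpU⟩ := H.exists_ne_mem_nhds hyx.symm (Filter.inter_mem hU hU')
  have hpC : p ∈ armTo x y := H.arc_diff_sub_armTo hyx ⟨hp, hpx⟩
  have hpU' := hpU (H.right_mem x p)
  have h1 := hs ⟨p, ⟨hpC, hpU'.1⟩, rfl⟩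
  have h2 := hs' ⟨p, ⟨hpC, hpU'.2⟩, rfl⟩
  exact (arm_eq_armTo hD h1).2.trans (arm_eq_armTo hD' h2).2.symm

theorem _root_.HubbardTrees.MapsLocalArm.comp {g h : X → X} {x : X} {C D E : Set X} (hg : Continuous g)
    (h1 : MapsLocalArm g x C D) (h2 : MapsLocalArm h (g x) D E) : MapsLocalArm (h ∘ g) x C E := by
  obtain ⟨hC, hD, U, hU, hs⟩ := h1
  obtain ⟨-, hE, V, hV, ht⟩ := h2
  refine ⟨hC, hE, U ∩ g ⁻¹' V, Filter.inter_mem hU (hg.continuousAt hV), ?_⟩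
  rintro _ ⟨w, ⟨hwC, hwU, hwV⟩, rfl⟩
  exact ht ⟨g w, ⟨hs ⟨w, ⟨hwC, hwU⟩, rfl⟩, hwV⟩, rfl⟩

theorem maps_one {x t : X} (hx : x ≠ H.c0) (ht : t ≠ x) (hc : H.Clr 1 x t) :
    MapsLocalArm H.f x (armTo x t) (armTo (H.f x) (H.f t)) := by
  have := H.t2
  have hft : H.f t ≠ H.f x := fun h => ht (hc.injOn (H.right_mem _ _) (H.left_mem _ _) h)
  refine ⟨armTo_mem ht, armTo_mem hft, ?_⟩
  obtain ⟨U₁, hU₁, hinj₁⟩ := H.local_inj hx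
  have hU₀ : U₁ ∩ {w | w ≠ H.c0} ∈ nhds x := Filter.inter_mem hU₁ (isOpen_ne.mem_nhds hx)
  obtain ⟨t', ht', htx', hsub⟩ := H.exists_ne_mem_nhds ht.symm hU₀
  obtain ⟨U, hU, hstar⟩ := H.star_nhd hU₀
  refine ⟨U, hU, ?_⟩
  have hmem : H.f t' ∈ H.arc (H.f x) (H.f t) := hc.mem ht'
  have hft' : H.f t' ≠ H.f x := fun h => htx' (hc.injOn ht' (H.left_mem _ _) h)
  rw [← H.arm_along hmem hft', ← H.arm_along ht' htx']
  rintro _ ⟨w, ⟨hwC, hwU⟩, rfl⟩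
  rw [H.mem_armTo_iff hft']
  rw [H.mem_armTo_iff htx'] at hwC
  have hsub' : H.arc t' w ⊆ U₁ ∩ {w | w ≠ H.c0} := by
    refine (H.arc_tri t' x w).trans (union_subset ?_ (hstar w hwU))
    rw [H.arc_comm]; exact hsub
  have hc' := (H.clr_one_of (x := t') (y := w) fun h => absurd rfl (hsub' h).2).img
  simp only [Function.iterate_one] at hc'
  rw [← hc']
  rintro ⟨v, hv, hvx⟩
  have : v = x := hinj₁ (hsub' hv).1 (mem_of_mem_nhds hU₁) hvx
  exact hwC (this ▸ hv)

theorem maps_clr {n : ℕ} {x t : X} (hx : ∀ k < n, H.f^[k] x ≠ H.c0) (ht : t ≠ x)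
    (hc : H.Clr n x t) :
    MapsLocalArm H.f^[n] x (armTo x t) (armTo (H.f^[n] x) (H.f^[n] t)) := by
  induction n with
  | zero => exact ⟨armTo_mem ht, armTo_mem ht, univ, Filter.univ_mem, by simp⟩
  | succ n ih =>
    have hc' := hc.mono (Nat.le_succ n)
    have h1 := ih (fun k hk => hx k (by omega)) hc'
    have hne : H.f^[n] t ≠ H.f^[n] x := fun h => ht (hc'.injOn (H.right_mem _ _) (H.left_mem _ _) h)
    have h2 := H.maps_one (hx n (by omega)) hne (by
      intro k hk w hw hwx hwy
      obtain rfl : k = 0 := by omega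
      rw [← hc'.img] at hw
      obtain ⟨v, hv, rfl⟩ := hw
      exact hc n (by omega) v hv (fun h => hwx (h ▸ rfl)) (fun h => hwy (h ▸ rfl)))
    have h3 := h1.comp (H.cont.iterate n) h2
    rw [Function.iterate_succ', ]
    exact h3

theorem maps_exists {n : ℕ} {x : X} {C : Set X} (hx : ∀ k < n, H.f^[k] x ≠ H.c0)
    (hC : C ∈ arms x) : ∃ D, MapsLocalArm H.f^[n] x C D := by
  induction n with
  | zero => exact ⟨C, hC, hC, univ, Filter.univ_mem, by simp⟩
  | succ n ih =>
    obtain ⟨D, hD⟩ := ih (fun k hk => hx k (by omega))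
    obtain ⟨y, hy⟩ := arm_nonempty hD.2.1
    obtain ⟨hyx, rfl⟩ := arm_eq_armTo hD.2.1 hy
    have hn := hx n (by omega)
    have h1 := H.maps_one hn (H.tp_ne hn hyx) (H.tp_clr _ _)
    rw [H.arm_along (H.tp_mem _ _) (H.tp_ne hn hyx)] at h1
    have h3 := hD.comp (H.cont.iterate n) h1
    rw [← Function.iterate_succ'] at h3
    exact ⟨_, h3⟩

theorem maps_inj_one {x : X} {C C' D : Set X} (hx : x ≠ H.c0)
    (h : MapsLocalArm H.f x C D) (h' : MapsLocalArm H.f x C' D) : C = C' := by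
  obtain ⟨a, ha⟩ := arm_nonempty h.1
  obtain ⟨hax, rfl⟩ := arm_eq_armTo h.1 ha
  obtain ⟨b, hb⟩ := arm_nonempty h'.1
  obtain ⟨hbx, rfl⟩ := arm_eq_armTo h'.1 hb
  by_contra hne
  obtain ⟨p1, p2, p3⟩ := H.push_sep hx hax hbx ((H.armTo_ne_iff hax hbx).1 hne)
  have h1 := H.maps_one hx (H.tp_ne hx hax) (H.tp_clr _ _)
  rw [H.arm_along (H.tp_mem _ _) (H.tp_ne hx hax)] at h1
  have h2 := H.maps_one hx (H.tp_ne hx hbx) (H.tp_clr _ _)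
  rw [H.arm_along (H.tp_mem _ _) (H.tp_ne hx hbx)] at h2
  have e1 := h.unique H h1
  have e2 := h'.unique H h2
  exact (H.armTo_ne_iff p2 p3).2 p1 (e1.symm.trans e2)

theorem maps_inj {n : ℕ} {x : X} {C C' D : Set X} (hx : ∀ k < n, H.f^[k] x ≠ H.c0)
    (h : MapsLocalArm H.f^[n] x C D) (h' : MapsLocalArm H.f^[n] x C' D) : C = C' := by
  induction n generalizing D with
  | zero =>
    obtain ⟨E, hE⟩ := H.maps_exists (n := 0) (x := x) (C := C) (by simp) h.1
    have e1 : MapsLocalArm H.f^[0] x C C := ⟨h.1, h.1, univ, Filter.univ_mem, by simp⟩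
    have e2 : MapsLocalArm H.f^[0] x C' C' := ⟨h'.1, h'.1, univ, Filter.univ_mem, by simp⟩
    exact (e1.unique H h).trans (h'.unique H e2)
  | succ n ih =>
    have hx' : ∀ k < n, H.f^[k] x ≠ H.c0 := fun k hk => hx k (by omega)
    obtain ⟨E, hE⟩ := H.maps_exists hx' h.1
    obtain ⟨E', hE'⟩ := H.maps_exists hx' h'.1
    have hn : ∀ k < 1, H.f^[k] (H.f^[n] x) ≠ H.c0 := by
      intro k hk; obtain rfl : k = 0 := by omega
      exact hx n (by omega)
    obtain ⟨F, hF⟩ := H.maps_exists hn hE.2.1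
    obtain ⟨F', hF'⟩ := H.maps_exists hn hE'.2.1
    have k1 := hE.comp (H.cont.iterate n) hF
    have k2 := hE'.comp (H.cont.iterate n) hF'
    rw [Function.iterate_one, ← Function.iterate_succ'] at k1 k2
    have f1 := k1.unique H h
    have f2 := k2.unique H h'
    subst f1
    subst f2
    rw [Function.iterate_one] at hF hF'
    have := H.maps_inj_one (hx n (by omega)) hF hF'
    subst this
    exact ih hx' hE hE'

open Classical in
/-- image of a local arm -/
noncomputable def img (n : ℕ) (x : X) (C : Set X) : Set X :=
  if h : ∃ D, MapsLocalArm H.f^[n] x C D then h.choose else ∅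

/-- the forward orbit avoids the critical point -/
def Av (x : X) : Prop := ∀ k, H.f^[k] x ≠ H.c0

variable {H}

theorem Av.iter {x : X} (h : H.Av x) (n : ℕ) : H.Av (H.f^[n] x) := by
  intro k; rw [← Function.iterate_add_apply]; exact h _

theorem Av.maps {n : ℕ} {x : X} {C : Set X} (hx : H.Av x) (hC : C ∈ arms x) :
    MapsLocalArm H.f^[n] x C (H.img n x C) := by
  have h := H.maps_exists (n := n) (fun k _ => hx k) hC
  unfold img
  rw [dif_pos h]
  exact h.choose_spec

theorem Av.img_eq {n : ℕ} {x : X} {C D : Set X} (hx : H.Av x) (h : MapsLocalArm H.f^[n] x C D) :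
    H.img n x C = D :=
  (hx.maps h.1).unique H h

theorem Av.img_mem {n : ℕ} {x : X} {C : Set X} (hx : H.Av x) (hC : C ∈ arms x) :
    H.img n x C ∈ arms (H.f^[n] x) := (hx.maps hC).2.1

theorem Av.img_add {n k : ℕ} {x : X} {C : Set X} (hx : H.Av x) (hC : C ∈ arms x) :
    H.img (k + n) x C = H.img k (H.f^[n] x) (H.img n x C) := by
  apply hx.img_eq
  rw [Function.iterate_add]
  exact (hx.maps hC).comp (H.cont.iterate n) ((hx.iter n).maps (hx.img_mem hC))

theorem Av.img_inj {n : ℕ} {x : X} {C D : Set X} (hx : H.Av x) (hC : C ∈ arms x) (hD : D ∈ arms x)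
    (h : H.img n x C = H.img n x D) : C = D := by
  have h1 := hx.maps (n := n) hC
  rw [h] at h1
  exact H.maps_inj (fun k _ => hx k) h1 (hx.maps hD)

theorem Av.img_clr {n : ℕ} {x t : X} (hx : H.Av x) (ht : t ≠ x) (hc : H.Clr n x t) :
    H.img n x (armTo x t) = armTo (H.f^[n] x) (H.f^[n] t) :=
  hx.img_eq (H.maps_clr (fun k _ => hx k) ht hc)

end HubbardTree

namespace HubbardTree
open Set

variable {X : Type*} [TopologicalSpace X] (H : HubbardTree X)

theorem chain {x y w v : X} (hw : w ∈ H.arc x y) (hv : v ∈ H.arc w y) : w ∈ H.arc x v := by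
  rcases H.sep_tri (y := v) hw with h | h
  · exact h
  · rw [H.arc_anti hv (H.left_mem _ _) h]; exact H.right_mem _ _

theorem arc_total {x y u v : X} (hu : u ∈ H.arc x y) (hv : v ∈ H.arc x y) :
    v ∈ H.arc x u ∨ u ∈ H.arc x v := by
  rw [H.arc_split hu] at hv
  rcases hv with h | h
  · exact Or.inl h
  · exact Or.inr (H.chain hu h)

theorem sep_symm {x y w : X} (h : w ∈ H.arc x y) : w ∈ H.arc y x := by
  rwa [H.arc_comm]

/-- the critical orbit -/
def cr (k : ℕ) : X := H.f^[k] H.c0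

theorem cr_zero : H.cr 0 = H.c0 := rfl
theorem cr_one : H.cr 1 = H.c1 := rfl
theorem iter_cr (n k : ℕ) : H.f^[n] (H.cr k) = H.cr (n + k) := by
  unfold cr; rw [Function.iterate_add_apply]
theorem iter_c0 (n : ℕ) : H.f^[n] H.c0 = H.cr n := rfl
theorem iter_c1 (n : ℕ) : H.f^[n] H.c1 = H.cr (n + 1) := H.iter_cr n 1

theorem marked_cr (k : ℕ) : IsBranchPt (H.cr k) ∨ ∃ j : ℕ, H.f^[j] H.c0 = H.cr k := Or.inr ⟨k, rfl⟩

theorem kneading_eq {k : ℕ} (hk : 1 ≤ k) : H.kneading k = H.symOf (H.cr k) := by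
  unfold kneading itin
  rw [H.iter_c1, Nat.sub_add_cancel hk]

theorem median_marked {x y v b : X} (h1 : b ∈ H.arc x y) (h2 : b ∈ H.arc y v) (h3 : b ∈ H.arc x v)
    (hx : IsBranchPt x ∨ ∃ k : ℕ, H.f^[k] H.c0 = x)
    (hy : IsBranchPt y ∨ ∃ k : ℕ, H.f^[k] H.c0 = y)
    (hv : IsBranchPt v ∨ ∃ k : ℕ, H.f^[k] H.c0 = v) :
    IsBranchPt b ∨ ∃ k : ℕ, H.f^[k] H.c0 = b := by
  by_cases e1 : x = b
  · rwa [e1] at hx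
  by_cases e2 : y = b
  · rwa [e2] at hy
  by_cases e3 : v = b
  · rwa [e3] at hv
  exact Or.inl (H.isBranch_of e1 e2 e3 h1 h3 h2)

theorem invariant_nh {N : ℕ} (hN : 1 ≤ N) {S : Set X} (hS : ∀ w ∈ S, H.f^[N] w ∈ S)
    (h : ∀ k < N, ∀ w ∈ S, H.f^[k] w ≠ H.c0) : ∀ k, ∀ w ∈ S, H.f^[k] w ≠ H.c0 := by
  intro k
  induction k using Nat.strong_induction_on with
  | _ k ih =>
    intro w hw
    rcases lt_or_ge k N with hk | hk
    · exact h k hk w hw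
    · have := ih (k - N) (by omega) _ (hS w hw)
      rwa [← Function.iterate_add_apply, Nat.sub_add_cancel hk] at this

theorem expans {x y : X} (hne : x ≠ y) (hx : IsBranchPt x ∨ ∃ k : ℕ, H.f^[k] H.c0 = x)
    (hy : IsBranchPt y ∨ ∃ k : ℕ, H.f^[k] H.c0 = y) : ∃ n, ¬ H.NH n x y := by
  obtain ⟨n, w, hw, hc⟩ := H.expansive x y hne hx hy
  exact ⟨n + 1, fun h => h n (by omega) w hw hc⟩

theorem invariant_arc {N : ℕ} (hN : 1 ≤ N) {x y : X} (h : H.NH N x y)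
    (hx : H.f^[N] x ∈ H.arc x y) (hy : H.f^[N] y ∈ H.arc x y) : ∀ n, H.NH n x y := by
  intro n k _ w hw
  refine H.invariant_nh hN (S := H.arc x y) ?_ h k w hw
  intro v hv
  exact H.arc_sub hx hy (h.clr.mem hv)

theorem nh_of_sym {n : ℕ} {x y : X} (hx : ∀ k < n, H.f^[k] x ≠ H.c0)
    (h : ∀ k < n, H.symOf (H.f^[k] x) = H.symOf (H.f^[k] y)) : H.NH n x y := by
  induction n with
  | zero => intro k hk; omega
  | succ n ih =>
    have h1 := ih (fun k hk => hx k (by omega)) (fun k hk => h k (by omega))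
    intro k hk w hw hc
    rcases Nat.lt_succ_iff_lt_or_eq.1 hk with hk' | rfl
    · exact h1 k hk' w hw hc
    · have h2 := h1.clr.mem hw
      rw [hc] at h2
      have hy : H.f^[k] y ≠ H.c0 := by
        intro hy
        have h3 := h k hk
        rw [H.symOf_star.2 hy, H.symOf_star] at h3
        exact hx k hk h3
      exact (H.symOf_eq_iff (hx k hk) hy).1 (h k hk) h2

theorem NH.left {n : ℕ} {x y : X} (h : H.NH n x y) {k : ℕ} (hk : k < n) : H.f^[k] x ≠ H.c0 :=
  h k hk x (H.left_mem _ _)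

theorem NH.right {n : ℕ} {x y : X} (h : H.NH n x y) {k : ℕ} (hk : k < n) : H.f^[k] y ≠ H.c0 :=
  h k hk y (H.right_mem _ _)

theorem NH.sym {n : ℕ} {x y : X} (h : H.NH n x y) {k : ℕ} (hk : k < n) :
    H.symOf (H.f^[k] x) = H.symOf (H.f^[k] y) := by
  rw [H.symOf_eq_iff (NH.left H h hk) (NH.right H h hk)]
  rw [← (h.mono hk.le).clr.img]
  rintro ⟨w, hw, hc⟩
  exact h k hk w hw hc

theorem hit_sym {n : ℕ} {x y p : X} (hne : x ≠ y) (h : H.NH n x y) (hp : p ∈ H.arc x y)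
    (hc : H.f^[n] p = H.c0) : H.symOf (H.f^[n] x) ≠ H.symOf (H.f^[n] y) := by
  have hm := h.clr.mem hp
  have hne' : H.f^[n] x ≠ H.f^[n] y := fun e =>
    hne (h.clr.injOn (H.left_mem _ _) (H.right_mem _ _) e)
  rw [hc] at hm
  intro hs
  by_cases hx : H.f^[n] x = H.c0
  · rw [H.symOf_star.2 hx] at hs
    exact hne' (hx.trans (H.symOf_star.1 hs.symm).symm)
  by_cases hy : H.f^[n] y = H.c0
  · rw [H.symOf_star.2 hy, H.symOf_star] at hs
    exact hx hs
  exact (H.symOf_eq_iff hx hy).1 hs hm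

/-- Lemma A -/
theorem lemmaA {z : X} (hb : IsBranchPt z) (hz1 : z ≠ H.c1) (hz : z ∈ H.arc H.c0 H.c1)
    (hch : ∀ k, H.f^[k] z = z ∨ z ∉ H.arc H.c0 (H.f^[k] z)) (N : ℕ) (hN : 1 ≤ N)
    (hfix : H.f^[N] z = z) (hNH : H.NH N z H.c1) : z ∈ H.arc H.c1 (H.cr (N + 1)) := by
  induction N using Nat.strong_induction_on with
  | _ N ih =>
  by_contra hcon
  have hFc : H.f^[N] H.c1 = H.cr (N + 1) := H.iter_c1 N
  have hy0 : H.cr (N + 1) ≠ z := by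
    intro h; rw [h] at hcon; exact hcon (H.right_mem _ _)
  have h1 : ∀ k, 0 < k → k < N → z ∈ H.arc H.c1 (H.cr (k + 1)) := by
    intro k hk hkN
    by_cases hf : H.f^[k] z = z
    · exact ih k hkN hk hf (hNH.mono hkN.le)
    by_contra hcon2
    have h2 := (hch k).resolve_left hf
    have h3 := (H.sep_tri (y := H.f^[k] z) hz).resolve_left h2
    have h4 : z ∈ H.arc (H.f^[k] z) (H.cr (k + 1)) :=
      (H.sep_tri (y := H.cr (k + 1)) h3).resolve_right fun h => hcon2 (H.sep_symm h)
    rw [← H.iter_c1, ← (hNH.mono hkN.le).clr.img] at h4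
    obtain ⟨w, hw, hwz⟩ := h4
    have h5 := hNH.clr.mem hw
    rw [hfix, hFc] at h5
    have h6 : H.f^[N] w = H.f^[N - k] z := by
      rw [← hwz, ← Function.iterate_add_apply, Nat.sub_add_cancel hkN.le]
    by_cases hu : H.f^[N - k] z = z
    · have := hNH.clr.injOn hw (H.left_mem _ _) ((h6.trans hu).trans hfix.symm)
      rw [this] at hwz
      exact hf hwz
    · rw [h6] at h5
      have e1 := H.arm_along h5 hu
      have h7 := (hch (N - k)).resolve_left hu
      have h8 := (H.sep_tri (y := H.f^[N - k] z) hz).resolve_left h7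
      rw [← H.armTo_ne_iff hu hz1.symm, e1, H.armTo_ne_iff hy0 hz1.symm] at h8
      exact hcon (H.sep_symm h8)
  obtain ⟨b, b1, b2, b3, -⟩ := H.exists_median z H.c1 (H.cr (N + 1))
  have hbz : b ≠ z := by rintro rfl; exact hcon b2
  have hFb := hNH.clr.mem b1
  rw [hfix, hFc] at hFb
  have hbm := H.median_marked b1 b2 b3 (Or.inl hb) (H.marked_cr 1) (H.marked_cr _)
  rcases (H.arc_split b3 ▸ hFb : H.f^[N] b ∈ H.arc z b ∪ H.arc b (H.cr (N + 1))) with h2 | h2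
  · obtain ⟨n, hn⟩ := H.expans hbz.symm (Or.inl hb) hbm
    exact hn (H.invariant_arc hN (hNH.sub (H.left_mem _ _) b1) (by rw [hfix]; exact H.left_mem _ _) h2 n)
  by_cases hbF : H.f^[N] b = b
  · obtain ⟨n, hn⟩ := H.expans hbz.symm (Or.inl hb) hbm
    exact hn (H.invariant_arc hN (hNH.sub (H.left_mem _ _) b1) (by rw [hfix]; exact H.left_mem _ _)
      (by rw [hbF]; exact H.right_mem _ _) n)
  have h3 : b ∈ H.arc z (H.f^[N] b) := H.chain b3 h2
  have h4 : H.f^[N] b ∉ H.arc z H.c1 := by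
    intro h
    rw [H.arc_split b1] at h
    rcases h with h | h
    · exact hbF (H.arc_anti b3 h h2)
    · exact hbF (H.arc_anti b2 (H.sep_symm h) h2)
  have h5 : ∀ l, b ∈ H.arc z (H.cr (l * N + 1)) ∧ H.NH N z (H.cr (l * N + 1)) := by
    intro l
    induction l with
    | zero => rw [zero_mul, zero_add]; exact ⟨b1, hNH⟩
    | succ l ihl =>
      obtain ⟨i1, i2⟩ := ihl
      have i3 := i2.clr.mem i1
      have e : N + (l * N + 1) = (l + 1) * N + 1 := by ring
      rw [hfix, H.iter_cr, e] at i3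
      refine ⟨H.sub_left i3 h3, ?_⟩
      by_contra hnot
      obtain ⟨p, hp, h, hh, hpc, hlt⟩ := H.first_hit_pt hnot
      have hbp : b ∈ H.arc z p := by
        rcases H.arc_total (H.sub_left i3 h3) hp with h6 | h6
        · exact absurd hpc (hNH h hh p (H.sub_left b1 h6))
        · exact h6
      have hcl : H.Clr N z p := fun j hj w hw _ hwp => hlt j hj w hw hwp
      have h7 := hcl.mem hbp
      have e2 : H.f^[N] p = H.cr (N - h) := by
        rw [← H.iter_c0, ← hpc, ← Function.iterate_add_apply, Nat.sub_add_cancel hh.le]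
      rw [hfix, e2] at h7
      by_cases h8 : h = N - 1
      · have : N - h = 1 := by omega
        rw [this] at h7
        exact h4 h7
      · have h9 := h1 (N - h - 1) (by omega) (by omega)
        have e3 : N - h - 1 + 1 = N - h := by omega
        rw [e3] at h9
        have h10 := H.sep_along h9 b1 (H.sub_left h7 h3)
        rw [H.arc_self] at h10
        exact hbz h10.symm
  have h6 : ∀ l, H.NH (l * N) z H.c1 ∧ H.f^[l * N] z = z := by
    intro l
    induction l with
    | zero => exact ⟨fun k hk => by omega, by simp⟩
    | succ l ihl =>
      rw [Nat.succ_mul]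
      refine ⟨ihl.1.add ?_, ?_⟩
      · rw [ihl.2, H.iter_c1]; exact (h5 l).2
      · rw [add_comm, Function.iterate_add_apply, ihl.2, hfix]
  obtain ⟨n, hn⟩ := H.expans hz1 (Or.inl hb) (H.marked_cr 1)
  refine hn ((h6 n).1.mono ?_)
  nlinarith

end HubbardTree


theorem rho_spec {ν : ℕ → Sym} {n R : ℕ} (h : rho ν n = (R : ℕ∞)) :
    n < R ∧ ν R ≠ ν (R - n) ∧ ∀ j, n < j → j < R → ν j = ν (j - n) := by
  unfold rho at h
  have hne : {e : ℕ∞ | ∃ j : ℕ, e = (j : ℕ∞) ∧ n < j ∧ ν j ≠ ν (j - n)}.Nonempty := by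
    by_contra hcon
    rw [Set.not_nonempty_iff_eq_empty] at hcon
    rw [hcon, sInf_empty] at h
    exact ENat.coe_ne_top _ h.symm
  have hmem := csInf_mem hne
  rw [h] at hmem
  obtain ⟨j, hj, h1, h2⟩ := hmem
  have hj' : R = j := by exact_mod_cast hj
  subst hj'
  refine ⟨h1, h2, ?_⟩
  intro j hj1 hj2
  by_contra hcon
  have : sInf {e : ℕ∞ | ∃ j : ℕ, e = (j : ℕ∞) ∧ n < j ∧ ν j ≠ ν (j - n)} ≤ (j : ℕ∞) :=
    sInf_le ⟨j, rfl, hj1, hcon⟩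
  rw [h] at this
  have : R ≤ j := by exact_mod_cast this
  omega

theorem rho_eq {ν : ℕ → Sym} {n R : ℕ} (h1 : n < R) (h2 : ν R ≠ ν (R - n))
    (h3 : ∀ j, n < j → j < R → ν j = ν (j - n)) : rho ν n = (R : ℕ∞) := by
  unfold rho
  apply le_antisymm
  · exact sInf_le ⟨R, rfl, h1, h2⟩
  · apply le_sInf
    rintro _ ⟨j, rfl, hj1, hj2⟩
    have : R ≤ j := by
      by_contra hcon
      exact hj2 (h3 j hj1 (by omega))
    exact_mod_cast this

theorem RhoOrbit.le {ν : ℕ → Sym} {k m : ℕ} (h : RhoOrbit ν k m) : k ≤ m := by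
  induction h with
  | refl => exact le_rfl
  | step _ h ih => exact ih.trans (rho_spec h).1.le

theorem RhoOrbit.head {ν : ℕ → Sym} {k j m : ℕ} (h1 : rho ν k = (j : ℕ∞)) (h : RhoOrbit ν j m) :
    RhoOrbit ν k m := by
  induction h with
  | refl => exact RhoOrbit.step (RhoOrbit.refl k) h1
  | step _ h ih => exact RhoOrbit.step ih h

theorem RhoOrbit.cases_head {ν : ℕ → Sym} {k m : ℕ} (h : RhoOrbit ν k m) :
    k = m ∨ ∃ j : ℕ, rho ν k = (j : ℕ∞) ∧ RhoOrbit ν j m := by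
  induction h with
  | refl => exact Or.inl rfl
  | @step m' j _ h ih =>
    right
    rcases ih with rfl | ⟨i, hi, ho⟩
    · exact ⟨j, h, RhoOrbit.refl j⟩
    · exact ⟨i, hi, RhoOrbit.step ho h⟩

theorem RhoOrbit.iff_of_rho {ν : ℕ → Sym} {k j m : ℕ} (hne : k ≠ m) (h1 : rho ν k = (j : ℕ∞)) :
    RhoOrbit ν k m ↔ RhoOrbit ν j m := by
  constructor
  · intro h
    rcases h.cases_head with h | ⟨i, hi, ho⟩
    · exact absurd h hne
    · rw [h1] at hi
      have : j = i := by exact_mod_cast hi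
      rwa [this]
  · exact RhoOrbit.head h1

theorem cycle_card {α : Type*} {S : Set α} {σ : α → α} {c : α} {q : ℕ} (hq : 0 < q)
    (hS : ∀ j, σ^[j] c ∈ S) (hall : ∀ s ∈ S, ∃ j, σ^[j] c = s) (hqc : σ^[q] c = c)
    (hmin : ∀ j, 0 < j → j < q → σ^[j] c ≠ c) : S.ncard = q := by
  have hmul : ∀ i k, σ^[i + q * k] c = σ^[i] c := by
    intro i k
    induction k with
    | zero => simp
    | succ k ih =>
      rw [Nat.mul_succ, ← add_assoc, Function.iterate_add_apply, hqc, ih]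
  have hSe : S = (fun j => σ^[j] c) '' (Finset.range q : Set ℕ) := by
    ext s
    constructor
    · intro hs
      obtain ⟨j, rfl⟩ := hall s hs
      refine ⟨j % q, by simpa using Nat.mod_lt _ hq, ?_⟩
      have := hmul (j % q) (j / q)
      rw [Nat.mod_add_div] at this
      exact this.symm
    · rintro ⟨j, -, rfl⟩
      exact hS j
  have hlt : ∀ i j, i < j → j < q → σ^[i] c ≠ σ^[j] c := by
    intro i j hij hj h
    have h1 : σ^[q - j + i] c = c := by
      rw [Function.iterate_add_apply, h, ← Function.iterate_add_apply, Nat.sub_add_cancel hj.le, hqc]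
    exact hmin (q - j + i) (by omega) (by omega) h1
  have hinj : Set.InjOn (fun j => σ^[j] c) (Finset.range q : Set ℕ) := by
    intro i hi j hj hij
    simp only [Finset.coe_range, Set.mem_Iio] at hi hj
    rcases lt_trichotomy i j with h | h | h
    · exact absurd hij (hlt i j h hj)
    · exact h
    · exact absurd hij.symm (hlt j i h hi)
  rw [hSe, Set.ncard_image_of_injOn hinj, Set.ncard_coe_finset, Finset.card_range]

namespace HubbardTree
open Set

variable {X : Type*} [TopologicalSpace X] (H : HubbardTree X)

/-- characteristic periodic branch point of exact period `m` -/
structure Chr (z : X) (m : ℕ) : Prop where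
  br : IsBranchPt z
  ne1 : z ≠ H.c1
  mem : z ∈ H.arc H.c0 H.c1
  ch : ∀ k, H.f^[k] z = z ∨ z ∉ H.arc H.c0 (H.f^[k] z)
  pos : 1 ≤ m
  per : H.f^[m] z = z
  exact : ∀ k, 1 ≤ k → k < m → H.f^[k] z ≠ z

variable {H}

theorem Chr.av {z : X} {m : ℕ} (h : H.Chr z m) : H.Av z := H.branch_avoid h.br

theorem Chr.ne0 {z : X} {m : ℕ} (h : H.Chr z m) : z ≠ H.c0 := h.av 0

theorem Chr.m0 {z : X} {m : ℕ} (h : H.Chr z m) : armTo z H.c0 ∈ arms z := armTo_mem h.ne0.symm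

theorem Chr.m1 {z : X} {m : ℕ} (h : H.Chr z m) : armTo z H.c1 ∈ arms z := armTo_mem h.ne1.symm

theorem Chr.ne01 {z : X} {m : ℕ} (h : H.Chr z m) : armTo z H.c0 ≠ armTo z H.c1 :=
  (H.armTo_ne_iff h.ne0.symm h.ne1.symm).2 h.mem

theorem Chr.per_mul {z : X} {m : ℕ} (h : H.Chr z m) (j : ℕ) : H.f^[m * j] z = z := by
  rw [Function.iterate_mul]; exact Function.iterate_fixed h.per j

theorem Chr.per_add {z : X} {m : ℕ} (h : H.Chr z m) (i j : ℕ) : H.f^[i + m * j] z = H.f^[i] z := by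
  rw [Function.iterate_add_apply, h.per_mul]

theorem Av.ne_c1 {z : X} (h : H.Av z) {r : ℕ} (hr : 1 ≤ r) : H.f^[r] z ≠ H.c1 := by
  intro e
  obtain ⟨k, rfl⟩ := Nat.exists_eq_add_of_le' hr
  rw [Function.iterate_succ_apply'] at e
  exact h k (H.c1_unique e)

theorem Chr.img_iter {z : X} {m : ℕ} (h : H.Chr z m) {C : Set X} (hC : C ∈ arms z) (j : ℕ) :
    H.img (m * j) z C = (H.img m z)^[j] C ∧ (H.img m z)^[j] C ∈ arms z := by
  induction j with
  | zero =>
    exact ⟨h.av.img_eq ⟨hC, hC, univ, Filter.univ_mem, by simp⟩, hC⟩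
  | succ j ih =>
    have h1 : m * (j + 1) = m + m * j := by ring
    rw [h1, h.av.img_add hC, h.per_mul, Function.iterate_succ_apply', ih.1]
    refine ⟨rfl, ?_⟩
    have := h.av.img_mem (n := m) ih.2
    rwa [h.per] at this

/-- Lemma B -/
theorem Chr.lemmaB {z : X} {m : ℕ} (h : H.Chr z m) (d r : ℕ) (hr : 1 ≤ r) (hd : d + r = m) :
    (H.img d (H.f^[r] z) (armTo (H.f^[r] z) H.c1) = armTo z H.c1 ∨
      H.img d (H.f^[r] z) (armTo (H.f^[r] z) H.c1) = armTo z H.c0) ∧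
    (H.NH m z H.c1 → (H.img d (H.f^[r] z) (armTo (H.f^[r] z) H.c1) = armTo z H.c1 ↔
      RhoOrbit H.kneading r m)) := by
  induction d using Nat.strong_induction_on generalizing r with
  | _ d ih =>
  rcases Nat.eq_zero_or_pos d with rfl | hdpos
  · have : r = m := by omega
    subst this
    have e : H.img 0 (H.f^[r] z) (armTo (H.f^[r] z) H.c1) = armTo z H.c1 := by
      rw [h.per]
      exact h.av.img_eq ⟨h.m1, h.m1, univ, Filter.univ_mem, by simp⟩
    refine ⟨Or.inl e, fun _ => ⟨fun _ => RhoOrbit.refl _, fun _ => e⟩⟩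
  have hav : H.Av (H.f^[r] z) := h.av.iter r
  have hz'1 : H.f^[r] z ≠ H.c1 := h.av.ne_c1 hr
  have hz'z : H.f^[r] z ≠ z := h.exact r hr (by omega)
  have hsep : z ∈ H.arc (H.f^[r] z) H.c1 :=
    (H.sep_tri (y := H.f^[r] z) h.mem).resolve_left ((h.ch r).resolve_left hz'z)
  have hdz : H.f^[d] (H.f^[r] z) = z := by rw [← Function.iterate_add_apply, hd, h.per]
  have hsymz : H.NH m z H.c1 → ∀ i < d, H.symOf (H.f^[i] (H.f^[r] z)) = H.kneading (r + i + 1) := by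
    intro hNH i hi
    rw [← Function.iterate_add_apply, NH.sym H hNH (by omega : i + r < m), H.iter_c1,
      H.kneading_eq (by omega)]
    congr 2; omega
  have hsymc : ∀ i, H.symOf (H.f^[i] H.c1) = H.kneading (i + 1) := by
    intro i; rw [H.iter_c1, H.kneading_eq (by omega)]
  by_cases hnh : H.NH d (H.f^[r] z) H.c1
  · have e : H.img d (H.f^[r] z) (armTo (H.f^[r] z) H.c1) = armTo z H.c0 := by
      rw [hav.img_clr hz'1.symm hnh.clr, hdz]
      have h1 := hnh.clr.mem hsep
      rw [hdz] at h1
      have hne : H.f^[d] z ≠ z := h.exact d hdpos (by omega)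
      rw [← H.arm_along h1 hne, H.armTo_eq_iff hne h.ne0.symm]
      intro hh
      exact (h.ch d).resolve_left hne (H.sep_symm hh)
    refine ⟨Or.inr e, fun hNH => ?_⟩
    constructor
    · intro e'; exact absurd (e.symm.trans e') h.ne01
    · intro ho
      exfalso
      rcases ho.cases_head with ho | ⟨j, hj, ho⟩
      · omega
      · obtain ⟨j1, j2, -⟩ := rho_spec hj
        have hjm := ho.le
        apply j2
        have h1 := hsymz hNH (j - r - 1) (by omega)
        have h2 := hsymc (j - r - 1)
        rw [NH.sym H hnh (by omega), h2] at h1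
        rw [show r + (j - r - 1) + 1 = j by omega, show j - r - 1 + 1 = j - r by omega] at h1
        exact h1.symm
  · obtain ⟨k, hk, hnk, p, hp, hpc, -, hclr, -⟩ := H.first_hit_time hnh
    have hpz : p ≠ H.f^[r] z := by
      rintro rfl; exact hav k hpc
    have hfp : H.f^[k + 1] p = H.c1 := by rw [Function.iterate_succ_apply', hpc]; rfl
    have e : H.img d (H.f^[r] z) (armTo (H.f^[r] z) H.c1) =
        H.img (d - (k + 1)) (H.f^[r + k + 1] z) (armTo (H.f^[r + k + 1] z) H.c1) := by
      have e1 : d = (d - (k + 1)) + (k + 1) := by omega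
      conv_lhs => rw [e1]
      rw [hav.img_add (armTo_mem hz'1.symm), ← H.arm_along hp hpz, hav.img_clr hpz hclr, hfp,
        ← Function.iterate_add_apply, show k + 1 + r = r + k + 1 by omega]
    rw [e]
    have hI := ih (d - (k + 1)) (by omega) (r + k + 1) (by omega) (by omega)
    refine ⟨hI.1, fun hNH => ?_⟩
    rw [hI.2 hNH]
    have hrho : rho H.kneading r = ((r + k + 1 : ℕ) : ℕ∞) := by
      apply rho_eq (by omega)
      · have h1 := H.hit_sym hz'1 hnk hp hpc
        rw [hsymz hNH k hk, hsymc] at h1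
        rwa [show r + k + 1 - r = k + 1 by omega]
      · intro j hj1 hj2
        have h1 := NH.sym H hnk (k := j - r - 1) (by omega)
        rw [hsymz hNH _ (by omega), hsymc] at h1
        rwa [show r + (j - r - 1) + 1 = j by omega, show j - r - 1 + 1 = j - r by omega] at h1
    exact (RhoOrbit.iff_of_rho (by omega) hrho).symm

theorem Chr.sigma0 {z : X} {m : ℕ} (h : H.Chr z m) :
    (H.img m z (armTo z H.c0) = armTo z H.c1 ∨ H.img m z (armTo z H.c0) = armTo z H.c0) ∧
    (H.NH m z H.c1 → (H.img m z (armTo z H.c0) = armTo z H.c1 ↔ RhoOrbit H.kneading 1 m)) := by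
  have hm := h.pos
  have e : H.img m z (armTo z H.c0) = H.img (m - 1) (H.f^[1] z) (armTo (H.f^[1] z) H.c1) := by
    have e1 : m = (m - 1) + 1 := by omega
    conv_lhs => rw [e1]
    rw [h.av.img_add h.m0, h.av.img_clr h.ne0.symm (H.clr_one_of fun _ => Or.inr rfl)]
    rfl
  rw [e]
  exact h.lemmaB (m - 1) 1 le_rfl (by omega)

theorem Chr.rho_of_hit {z : X} {m n : ℕ} (h : H.Chr z m) (hmn : m ≤ n) (hn : H.NH n z H.c1) {p : X}
    (hp : p ∈ H.arc z H.c1) (hpc : H.f^[n] p = H.c0) :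
    rho H.kneading m = ((n + 1 : ℕ) : ℕ∞) := by
  have hm := h.pos
  have hz : ∀ i, m ≤ i → H.f^[i] z = H.f^[i - m] z := by
    intro i hi
    conv_lhs => rw [show i = (i - m) + m * 1 by omega]
    rw [h.per_add]
  have hc : ∀ i, H.symOf (H.f^[i] H.c1) = H.kneading (i + 1) := by
    intro i; rw [H.iter_c1, H.kneading_eq (by omega)]
  apply rho_eq (by omega)
  · have h1 := H.hit_sym h.ne1 hn hp hpc
    rw [hz n hmn, NH.sym H hn (k := n - m) (by omega), hc, hc] at h1
    rw [show n + 1 - m = n - m + 1 by omega]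
    exact h1.symm
  · intro j hj1 hj2
    have h1 := NH.sym H hn (k := j - 1) (by omega)
    rw [hz (j - 1) (by omega), NH.sym H hn (k := j - 1 - m) (by omega), hc, hc] at h1
    rw [show j - 1 - m + 1 = j - m by omega, show j - 1 + 1 = j by omega] at h1
    exact h1.symm

theorem Chr.img_hit {z : X} {m n : ℕ} (h : H.Chr z m) {p : X}
    (hp : p ∈ H.arc z H.c1) (hpc : H.f^[n] p = H.c0) (hcl : H.Clr (n + 1) z p) :
    H.img (n + 1) z (armTo z H.c1) = armTo (H.f^[n + 1] z) H.c1 := by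
  have hpz : p ≠ z := by rintro rfl; exact h.av n hpc
  have hfp : H.f^[n + 1] p = H.c1 := by rw [Function.iterate_succ_apply', hpc]; rfl
  rw [← H.arm_along hp hpz, h.av.img_clr hpz hcl, hfp]

theorem Chr.count {z : X} {m n : ℕ} (h : H.Chr z m) (hn : H.NH n z H.c1) {p : X}
    (hp : p ∈ H.arc z H.c1) (hpc : H.f^[n] p = H.c0) (hcl : H.Clr (n + 1) z p) (hmn : m ≤ n)
    (h0 : H.img m z (armTo z H.c0) = armTo z H.c1) {r : ℕ} (hr : 1 ≤ r) (hrm : r ≤ m)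
    (hmod : r ≡ n + 1 [MOD m]) :
    0 < qArms H.kneading m (n + 1) r ∧
    (H.img m z)^[qArms H.kneading m (n + 1) r] (armTo z H.c1) = armTo z H.c1 ∧
    ∀ j, 0 < j → j < qArms H.kneading m (n + 1) r →
      (H.img m z)^[j] (armTo z H.c1) ≠ armTo z H.c1 := by
  have hm := h.pos
  obtain ⟨a, ha⟩ : ∃ a, n + 1 = r + m * a := by
    have := (Nat.modEq_iff_dvd' (by omega : r ≤ n + 1)).1 hmod
    obtain ⟨a, ha⟩ := this
    exact ⟨a, by omega⟩
  have hdiv : (n + 1 - r) / m = a := by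
    rw [ha, Nat.add_sub_cancel_left, Nat.mul_div_cancel_left a (by omega)]
  have hj : ∀ j, 0 < j → j ≤ a → (H.img m z)^[j] (armTo z H.c1) ≠ armTo z H.c1 := by
    intro j hj1 hj2
    have hle : m * j ≤ n := by
      have : m * j ≤ m * a := Nat.mul_le_mul_left _ hj2
      omega
    have hnj : H.NH (m * j) z H.c1 := hn.mono hle
    rw [← (h.img_iter h.m1 j).1, h.av.img_clr h.ne1.symm hnj.clr, h.per_mul, H.iter_c1]
    have hA := H.lemmaA h.br h.ne1 h.mem h.ch (m * j) (Nat.mul_pos hm hj1) (h.per_mul j) hnj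
    have hne : H.cr (m * j + 1) ≠ z := by
      rw [← H.iter_c1]
      intro e
      exact h.ne1.symm (hnj.clr.injOn (H.right_mem _ _) (H.left_mem _ _) (e.trans (h.per_mul j).symm))
    rw [H.armTo_ne_iff hne h.ne1.symm]
    exact H.sep_symm hA
  have hlast : (H.img m z)^[a + 1] (armTo z H.c1) =
      H.img (m - r) (H.f^[r] z) (armTo (H.f^[r] z) H.c1) := by
    rw [← (h.img_iter h.m1 (a + 1)).1]
    have e1 : m * (a + 1) = (m - r) + (n + 1) := by rw [Nat.mul_succ]; omega
    rw [e1, h.av.img_add h.m1, h.img_hit hp hpc hcl, ha, h.per_add]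
  have hB := h.lemmaB (m - r) r hr (by omega)
  have hB2 := hB.2 (hn.mono hmn)
  unfold qArms
  rw [hdiv]
  split_ifs with ho
  · refine ⟨by omega, ?_, fun j h1 h2 => hj j h1 (by omega)⟩
    rw [hlast]; exact hB2.2 ho
  · have e0 : (H.img m z)^[a + 1] (armTo z H.c1) = armTo z H.c0 := by
      rw [hlast]
      exact hB.1.resolve_left fun e => ho (hB2.1 e)
    refine ⟨by omega, ?_, fun j h1 h2 => ?_⟩
    · rw [show a + 2 = (a + 1) + 1 by omega, Function.iterate_succ_apply', e0, h0]
    · rcases Nat.lt_or_ge a j with h3 | h3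
      · obtain rfl : j = a + 1 := by omega
        rw [e0]; exact h.ne01
      · exact hj j h1 h3

theorem Chr.of_char {z : X} {m : ℕ} (hb : IsBranchPt z) (hc : H.IsCharacteristic z)
    (hp : ExactPeriod H.f z m) : H.Chr z m := by
  obtain ⟨Cv, Cz, hCv, hCz, hne, h1, h0, hk⟩ := hc
  obtain ⟨n1, e1⟩ := arm_eq_armTo hCv h1
  obtain ⟨n0, e0⟩ := arm_eq_armTo hCz h0
  refine ⟨hb, n1.symm, ?_, ?_, hp.1, hp.2.1, hp.2.2⟩
  · rw [← H.armTo_ne_iff n0 n1, ← e1, ← e0]; exact hne.symm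
  · intro k
    by_cases h : H.f^[k] z = z
    · exact Or.inl h
    · right
      have := hk k h
      rw [e0, H.mem_armTo_iff n0] at this
      exact this

theorem Chr.to_char {z : X} {m : ℕ} (h : H.Chr z m) : H.IsCharacteristic z := by
  refine ⟨armTo z H.c1, armTo z H.c0, h.m1, h.m0, h.ne01.symm, self_mem_armTo h.ne1.symm,
    self_mem_armTo h.ne0.symm, ?_⟩
  intro k hk
  rw [H.mem_armTo_iff h.ne0.symm]
  exact (h.ch k).resolve_left hk

theorem Chr.hit {z : X} {m : ℕ} (h : H.Chr z m) : ∃ n p, H.NH n z H.c1 ∧ p ∈ H.arc z H.c1 ∧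
    H.f^[n] p = H.c0 ∧ H.Clr (n + 1) z p := by
  obtain ⟨n, hn⟩ := H.expans h.ne1 (Or.inl h.br) (H.marked_cr 1)
  obtain ⟨k, -, hk, p, hp, hpc, -, hcl, -⟩ := H.first_hit_time hn
  exact ⟨k, p, hk, hp, hpc, hcl⟩

theorem part1 (H : HubbardTree X) {m : ℕ} {z : X} (hb : IsBranchPt z) (hc : H.IsCharacteristic z)
    (hp : ExactPeriod H.f z m) (ht : ArmsTransitive H.f m z) :
    InternalAddress H.kneading m ∧
      ∀ R r : ℕ, rho H.kneading m = (R : ℕ∞) → 1 ≤ r → r ≤ m → r ≡ R [MOD m] →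
        (arms z).ncard = qArms H.kneading m R r := by
  have h := Chr.of_char hb hc hp
  obtain ⟨n, p, hn, hpm, hpc, hcl⟩ := h.hit
  have hm := h.pos
  have htr : ∀ C ∈ arms z, ∀ C' ∈ arms z, ∃ j, (H.img m z)^[j] C = C' := by
    intro C hC C' hC'
    obtain ⟨j, hj⟩ := ht C hC C' hC'
    refine ⟨j, ?_⟩
    rw [← (h.img_iter hC j).1]
    exact h.av.img_eq hj
  have hmn : m ≤ n := by
    by_contra hcon
    have hs1 : H.img m z (armTo z H.c1) = armTo z H.c1 ∨ H.img m z (armTo z H.c1) = armTo z H.c0 := by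
      have e1 : m = (m - (n + 1)) + (n + 1) := by omega
      have e : H.img m z (armTo z H.c1) =
          H.img (m - (n + 1)) (H.f^[n + 1] z) (armTo (H.f^[n + 1] z) H.c1) := by
        conv_lhs => rw [e1]
        rw [h.av.img_add h.m1, h.img_hit hpm hpc hcl]
      rw [e]
      exact (h.lemmaB (m - (n + 1)) (n + 1) (by omega) (by omega)).1
    have hs0 := h.sigma0.1
    have hall : ∀ j, (H.img m z)^[j] (armTo z H.c1) = armTo z H.c1 ∨
        (H.img m z)^[j] (armTo z H.c1) = armTo z H.c0 := by
      intro j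
      induction j with
      | zero => exact Or.inl rfl
      | succ j ih =>
        rw [Function.iterate_succ_apply']
        rcases ih with e | e <;> rw [e]
        · exact hs1
        · exact hs0
    have hsub : arms z ⊆ {armTo z H.c1, armTo z H.c0} := by
      intro C hC
      obtain ⟨j, rfl⟩ := htr _ h.m1 C hC
      exact hall j
    have h3 : 3 ≤ (arms z).ncard := hb
    have h4 := ncard_le_ncard hsub (by simp)
    have h5 := ncard_pair h.ne01.symm
    omega
  have h0 : H.img m z (armTo z H.c0) = armTo z H.c1 := by
    refine h.sigma0.1.resolve_right fun e => ?_
    obtain ⟨j, hj⟩ := htr _ h.m0 _ h.m1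
    rw [Function.iterate_fixed e] at hj
    exact h.ne01 hj
  refine ⟨(h.sigma0.2 (hn.mono hmn)).1 h0, ?_⟩
  intro R r hR hr hrm hmod
  have hR' := h.rho_of_hit hmn hn hpm hpc
  rw [hR] at hR'
  have hRn : R = n + 1 := by exact_mod_cast hR'
  subst hRn
  obtain ⟨q1, q2, q3⟩ := h.count hn hpm hpc hcl hmn h0 hr hrm hmod
  exact cycle_card q1 (fun j => (h.img_iter h.m1 j).2) (htr _ h.m1) q2 q3

end HubbardTree

namespace HubbardTree
open Set

variable {X : Type*} [TopologicalSpace X] {H : HubbardTree X}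

theorem Chr.finish {x : X} {m R r : ℕ} (h : H.Chr x m) (hnh : H.NH m x H.c1)
    (hI : RhoOrbit H.kneading 1 m) (hR : rho H.kneading m = (R : ℕ∞)) (hr : 1 ≤ r) (hrm : r ≤ m)
    (hmod : r ≡ R [MOD m]) :
    ∃ z : X, IsBranchPt z ∧ H.IsCharacteristic z ∧ ExactPeriod H.f z m ∧
        ArmsTransitive H.f m z ∧ (arms z).ncard = qArms H.kneading m R r := by
  obtain ⟨n, p, hn, hpm, hpc, hcl⟩ := h.hit
  have hm := h.pos
  have hmn : m ≤ n := by
    by_contra hcon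
    exact hnh n (by omega) p hpm hpc
  have h0 : H.img m x (armTo x H.c0) = armTo x H.c1 := (h.sigma0.2 hnh).2 hI
  have hR' := h.rho_of_hit hmn hn hpm hpc
  rw [hR] at hR'
  have hRn : R = n + 1 := by exact_mod_cast hR'
  subst hRn
  obtain ⟨q1, q2, q3⟩ := h.count hn hpm hpc hcl hmn h0 hr hrm hmod
  set q := qArms H.kneading m (n + 1) r with hq
  set σ := H.img m x with hσ
  have hqmul : ∀ i, σ^[q * i] (armTo x H.c1) = armTo x H.c1 := by
    intro i
    rw [Function.iterate_mul]; exact Function.iterate_fixed q2 i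
  have hinj : ∀ j, ∀ C ∈ arms x, ∀ D ∈ arms x, σ^[j] C = σ^[j] D → C = D := by
    intro j C hC D hD e
    rw [← (h.img_iter hC j).1, ← (h.img_iter hD j).1] at e
    exact h.av.img_inj hC hD e
  have hto : ∀ E ∈ arms x, ∃ j, σ^[j] E = armTo x H.c1 := by
    intro E hE
    obtain ⟨e, he, hex, rfl⟩ := H.exists_endpoint_arm hE
    obtain ⟨k, hk⟩ := H.endpoints_on_orbit e he
    obtain ⟨n0, hn0⟩ := H.expans hex.symm (Or.inl h.br) (Or.inr ⟨k, hk⟩)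
    obtain ⟨n', -, -, p', hp', hpc', -, hcl', -⟩ := H.first_hit_time hn0
    have hpx : p' ≠ x := by rintro rfl; exact h.av n' hpc'
    have hfp : H.f^[n' + 1] p' = H.c1 := by rw [Function.iterate_succ_apply', hpc']; rfl
    have e1 : H.img (n' + 1) x (armTo x e) = armTo (H.f^[n' + 1] x) H.c1 := by
      rw [← H.arm_along hp' hpx, h.av.img_clr hpx hcl', hfp]
    have hdm := Nat.mod_add_div n' m
    have hlt := Nat.mod_lt n' hm
    have e2 : σ^[n' / m + 1] (armTo x e) = H.img (m - (n' % m + 1)) (H.f^[n' % m + 1] x)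
        (armTo (H.f^[n' % m + 1] x) H.c1) := by
      rw [← (h.img_iter hE _).1]
      have : m * (n' / m + 1) = (m - (n' % m + 1)) + (n' + 1) := by rw [Nat.mul_succ]; omega
      have h3 : n' + 1 = (n' % m + 1) + m * (n' / m) := by omega
      rw [this, h.av.img_add hE, e1]
      have h4 : H.f^[n' + 1] x = H.f^[n' % m + 1] x := by
        conv_lhs => rw [h3]
        rw [h.per_add]
      rw [h4]
    rcases (h.lemmaB (m - (n' % m + 1)) (n' % m + 1) (by omega) (by omega)).1 with e3 | e3
    · exact ⟨_, e2.trans e3⟩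
    · refine ⟨n' / m + 1 + 1, ?_⟩
      rw [Function.iterate_succ_apply', e2, e3, h0]
  have hfrom : ∀ E ∈ arms x, ∃ j, σ^[j] (armTo x H.c1) = E := by
    intro E hE
    obtain ⟨j, hj⟩ := hto E hE
    refine ⟨q * j - j, ?_⟩
    apply hinj j _ (h.img_iter h.m1 _).2 _ hE
    rw [← Function.iterate_add_apply, hj]
    have : j ≤ q * j := Nat.le_mul_of_pos_left j q1
    rw [Nat.add_sub_cancel' this, hqmul]
  refine ⟨x, h.br, h.to_char, ⟨h.pos, h.per, h.exact⟩, ?_, 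
    cycle_card q1 (fun j => (h.img_iter h.m1 j).2) hfrom q2 q3⟩
  intro C hC C' hC'
  obtain ⟨j, hj⟩ := hto C hC
  obtain ⟨i, hi⟩ := hfrom C' hC'
  refine ⟨i + j, ?_⟩
  have h1 := h.av.maps (n := m * (i + j)) hC
  rw [(h.img_iter hC _).1] at h1
  have e : (H.img m x)^[i + j] C = C' := by
    rw [Function.iterate_add_apply]
    change σ^[i] (σ^[j] C) = C'
    rw [hj, hi]
  rwa [e] at h1

variable (H)

theorem median_unique {a b c x y : X} (x1 : x ∈ H.arc a b) (x2 : x ∈ H.arc b c) (x3 : x ∈ H.arc a c)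
    (y1 : y ∈ H.arc a b) (y2 : y ∈ H.arc b c) (y3 : y ∈ H.arc a c) : x = y := by
  have key : ∀ {x y : X}, x ∈ H.arc a b → x ∈ H.arc b c → x ∈ H.arc a c → y ∈ H.arc b c →
      y ∈ H.arc a x → y = x := by
    intro x y x1 x2 x3 y2 h
    rw [H.arc_split x2] at y2
    rcases y2 with h' | h'
    · exact H.arc_anti x1 h (H.sep_symm h')
    · exact H.arc_anti x3 h h'
  rcases H.arc_total x1 y1 with h | h
  · exact (key x1 x2 x3 y2 h).symm
  · exact key y1 y2 y3 x2 h

/-- closest precritical point of step `m` on the arc from `c0` to `c1` -/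
structure Zt (ζ : X) (m : ℕ) : Prop where
  pos : 1 ≤ m
  mem : ζ ∈ H.arc H.c0 H.c1
  ne1 : ζ ≠ H.c1
  hit : H.f^[m - 1] ζ = H.c0
  first : ∀ k < m - 1, H.f^[k] ζ ≠ H.c0
  nh : ∀ w ∈ H.arc ζ H.c1, w ≠ ζ → ∀ k < m, H.f^[k] w ≠ H.c0

variable {H}

theorem Zt.clr {ζ : X} {m : ℕ} (h : H.Zt ζ m) : H.Clr m ζ H.c1 :=
  fun k hk w hw h1 _ => h.nh w hw h1 k hk

theorem Zt.fm {ζ : X} {m : ℕ} (h : H.Zt ζ m) : H.f^[m] ζ = H.c1 := by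
  have e : m = (m - 1) + 1 := by have := h.pos; omega
  rw [e, Function.iterate_succ_apply', h.hit]; rfl

theorem Zt.sub_nh {ζ x : X} {m : ℕ} (h : H.Zt ζ m) (hx : x ∈ H.arc ζ H.c1) (hxz : x ≠ ζ) :
    H.NH m x H.c1 := by
  intro k hk w hw
  refine h.nh w (H.sub_right hx hw) ?_ k hk
  rintro rfl
  exact hxz (H.arc_anti hx (H.left_mem _ _) hw).symm

variable (H)

theorem cr_ne {m R : ℕ} (hI : RhoOrbit H.kneading 1 m) (hR : rho H.kneading m = (R : ℕ∞))
    (hne : ¬ ExactPeriod H.f H.c0 m) : ∀ j, 1 ≤ j → j ≤ m → H.cr j ≠ H.c0 := by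
  classical
  intro j0 hj0 hj0m hcj0
  have hex : ∃ j, 1 ≤ j ∧ H.cr j = H.c0 := ⟨j0, hj0, hcj0⟩
  set j := Nat.find hex with hj
  obtain ⟨hj1, hjc⟩ := Nat.find_spec hex
  have hjmin : ∀ i, 1 ≤ i → i < j → H.cr i ≠ H.c0 := fun i h1 h2 h3 =>
    Nat.find_min hex h2 ⟨h1, h3⟩
  have hjle : j ≤ j0 := Nat.find_min' hex ⟨hj0, hcj0⟩
  rw [← hj] at hj1 hjc
  have hrj : ∀ R' : ℕ, rho H.kneading j ≠ (R' : ℕ∞) := by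
    intro R' h
    obtain ⟨h1, h2, -⟩ := rho_spec h
    apply h2
    rw [H.kneading_eq (by omega), H.kneading_eq (by omega)]
    congr 1
    have e := H.iter_cr (R' - j) j
    rw [hjc, H.iter_c0, show R' - j + j = R' by omega] at e
    exact e.symm
  have hle : ∀ n, RhoOrbit H.kneading 1 n → n ≤ j := by
    intro n hn
    induction hn with
    | refl => exact hj1
    | @step k R' hk h ih =>
      rcases Nat.lt_or_ge k j with hlt | hge
      · by_contra hcon
        obtain ⟨h1, h2, h3⟩ := rho_spec h
        have h4 := h3 j hlt (by omega)
        rw [H.kneading_eq hj1, H.kneading_eq (by omega), H.symOf_star.2 hjc] at h4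
        exact hjmin (j - k) (by omega) (by have := hk.le; omega) (H.symOf_star.1 h4.symm)
      · have : k = j := by omega
        rw [this] at h
        exact absurd h (hrj R')
  have hm := hle m hI
  have hmj : m = j := by omega
  apply hne
  rw [hmj]
  exact ⟨hj1, hjc, hjmin⟩

theorem rho_nh {m R : ℕ} (hm : 1 ≤ m) (hR : rho H.kneading m = (R : ℕ∞)) {n : ℕ} (hn : n < R - m)
    (hc : ∀ j, 1 ≤ j → j ≤ n → H.cr j ≠ H.c0) : H.NH n H.c1 (H.cr (m + 1)) := by
  obtain ⟨h1, h2, h3⟩ := rho_spec hR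
  apply H.nh_of_sym
  · intro k hk
    rw [H.iter_c1]; exact hc _ (by omega) (by omega)
  · intro k hk
    have := h3 (m + k + 1) (by omega) (by omega)
    rw [H.kneading_eq (by omega), H.kneading_eq (by omega)] at this
    rw [H.iter_c1, H.iter_cr, show k + (m + 1) = m + k + 1 by omega, this]
    congr 2; omega

theorem rho_hit {m R : ℕ} (hm : 1 ≤ m) (hR : rho H.kneading m = (R : ℕ∞))
    (hc : ∀ j, 1 ≤ j → j ≤ R - m - 1 → H.cr j ≠ H.c0) :
    ∃ p ∈ H.arc H.c1 (H.cr (m + 1)), H.f^[R - m - 1] p = H.c0 ∧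
      (∀ w ∈ H.arc H.c1 (H.cr (m + 1)), H.f^[R - m - 1] w = H.c0 → w = p) ∧
      H.NH (R - m - 1) H.c1 (H.cr (m + 1)) := by
  obtain ⟨h1, h2, h3⟩ := rho_spec hR
  have hnh := H.rho_nh hm hR (n := R - m - 1) (by omega) hc
  have hnot : ¬ H.NH (R - m - 1 + 1) H.c1 (H.cr (m + 1)) := by
    intro h
    have h4 := NH.sym H h (k := R - m - 1) (by omega)
    rw [H.iter_c1, H.iter_cr] at h4
    apply h2
    rw [H.kneading_eq (by omega), H.kneading_eq (by omega)]
    rw [show R - m - 1 + (m + 1) = R by omega, show R - m - 1 + 1 = R - m by omega] at h4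
    exact h4.symm
  obtain ⟨k, hk, -, p, hp, hpc, hu, -, -⟩ := H.first_hit_time hnot
  have hke : k = R - m - 1 := by
    by_contra hcon
    exact hnh k (by omega) p hp hpc
  subst hke
  exact ⟨p, hp, hpc, hu, hnh⟩

theorem exists_Zt {m : ℕ} (hI : RhoOrbit H.kneading 1 m)
    (hc : ∀ j, 1 ≤ j → j ≤ m → H.cr j ≠ H.c0) : ∃ ζ, H.Zt ζ m := by
  induction hI with
  | refl =>
    refine ⟨H.c0, le_rfl, H.left_mem _ _, H.crit_not_fixed.symm, rfl, by intro k hk; omega, ?_⟩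
    intro w _ hw k hk
    obtain rfl : k = 0 := by omega
    exact hw
  | @step m R hI hR ih =>
    obtain ⟨h1, h2, h3⟩ := rho_spec hR
    obtain ⟨ζ, hζ⟩ := ih fun j a b => hc j a (by omega)
    have hm := hζ.pos
    obtain ⟨p, hp, hpc, hpu, hnh⟩ := H.rho_hit hm hR fun j a b => hc j a (by omega)
    have hp1 : p ≠ H.c1 := by
      rintro rfl
      rw [H.iter_c1] at hpc
      exact hc _ (by omega) (by omega) hpc
    have hp2 : p ≠ H.cr (m + 1) := by
      rintro rfl
      rw [H.iter_cr] at hpc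
      exact hc _ (by omega) (by omega) hpc
    have hi := hζ.clr.img
    rw [hζ.fm, H.iter_c1] at hi
    obtain ⟨ξ, hξ, hξp⟩ : p ∈ H.f^[m] '' H.arc ζ H.c1 := by rw [hi]; exact hp
    have hξζ : ξ ≠ ζ := by rintro rfl; rw [hζ.fm] at hξp; exact hp1 hξp.symm
    have hξ1 : ξ ≠ H.c1 := by rintro rfl; rw [H.iter_c1] at hξp; exact hp2 hξp.symm
    have hsub := hζ.sub_nh hξ hξζ
    have hsplit : ∀ k, m ≤ k → ∀ w, H.f^[k] w = H.f^[k - m] (H.f^[m] w) := by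
      intro k hk w
      rw [← Function.iterate_add_apply, Nat.sub_add_cancel hk]
    refine ⟨ξ, by omega, H.sub_right hζ.mem hξ, hξ1, ?_, ?_, ?_⟩
    · rw [hsplit _ (by omega), hξp, show R - 1 - m = R - m - 1 by omega, hpc]
    · intro k hk
      rcases Nat.lt_or_ge k m with hkm | hkm
      · exact hsub k hkm _ (H.left_mem _ _)
      · rw [hsplit _ hkm, hξp]
        exact hnh _ (by omega) p hp
    · intro w hw hwξ k hk
      rcases Nat.lt_or_ge k m with hkm | hkm
      · exact hsub k hkm _ hw
      · rw [hsplit _ hkm]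
        have hw' := H.sub_right hξ hw
        have hFw : H.f^[m] w ∈ H.arc H.c1 (H.cr (m + 1)) := by rw [← hi]; exact ⟨w, hw', rfl⟩
        rcases Nat.lt_or_ge (k - m) (R - m - 1) with hk2 | hk2
        · exact hnh _ hk2 _ hFw
        · rw [show k - m = R - m - 1 by omega]
          intro hcon
          have := hpu _ hFw hcon
          rw [← hξp] at this
          exact hwξ (hζ.clr.injOn hw' hξ this)

variable {H}

/-- the iterates of `ζ` are not behind `ζ` -/
theorem Zt.star {ζ : X} {m : ℕ} (h : H.Zt ζ m) : ∀ k, 0 < k → k < m → ζ ∉ H.arc H.c0 (H.f^[k] ζ) := by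
  intro k0 hk0 hk0m hbad
  have hm := h.pos
  have hlt : ∀ i j, i < j → j < m → H.f^[i] ζ ≠ H.f^[j] ζ := by
    intro i j hij hj e
    have h1 : H.f^[m - 1 - j] (H.f^[i] ζ) = H.c0 := by
      rw [e, ← Function.iterate_add_apply, show m - 1 - j + j = m - 1 by omega, h.hit]
    rw [← Function.iterate_add_apply] at h1
    exact h.first _ (by omega) h1
  have hinj : ∀ i j, i < m → j < m → H.f^[i] ζ = H.f^[j] ζ → i = j := by
    intro i j hi hj e
    rcases lt_trichotomy i j with h' | h' | h'
    · exact absurd e (hlt i j h' hj)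
    · exact h'
    · exact absurd e.symm (hlt j i h' hi)
  have hlate : ∀ k < m, H.f^[m - 1 - k] (H.f^[k] ζ) = H.c0 := by
    intro k hk
    rw [← Function.iterate_add_apply, show m - 1 - k + k = m - 1 by omega, h.hit]
  -- points of the orbit beyond ζ on the arc to `c1` do not exist
  have hno : ∀ k < m, H.f^[k] ζ ∈ H.arc ζ H.c1 → k = 0 := by
    intro k hk hmem
    by_contra hk0
    refine h.nh _ hmem ?_ (m - 1 - k) (by omega) (hlate k hk)
    exact fun e => hlt 0 k (by omega) hk e.symm
  have main : ∀ k, k < m → 1 ≤ k → H.f^[k] ζ ∉ H.arc H.c0 H.c1 →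
      (∀ j < m, H.f^[k] ζ ∈ H.arc H.c0 (H.f^[j] ζ) → j = k) → False := by
    intro k
    induction k with
    | zero => intro _ h1; omega
    | succ k ih =>
      intro hk _ P1 P2
      have hk' : H.f^[k + 1] ζ = H.f (H.f^[k] ζ) := Function.iterate_succ_apply' _ _ _
      have hne : H.f^[k] ζ ≠ H.c0 := h.first k (by omega)
      have Q2 : ∀ j < m, H.f^[k] ζ ∈ H.arc H.c0 (H.f^[j] ζ) → j = k := by
        intro j hj hmem
        have hcl : H.Clr 1 H.c0 (H.f^[j] ζ) := H.clr_one_of fun _ => Or.inl rfl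
        have h1 := hcl.mem hmem
        change H.f (H.f^[k] ζ) ∈ H.arc H.c1 (H.f (H.f^[j] ζ)) at h1
        rw [← hk', ← Function.iterate_succ_apply' H.f] at h1
        rcases H.sep_tri (y := H.c0) h1 with h2 | h2
        · exact absurd (H.sep_symm h2) P1
        · rcases Nat.lt_or_ge (j + 1) m with h3 | h3
          · have := P2 _ h3 h2
            omega
          · have e : j.succ = m := by omega
            rw [e, h.fm] at h2
            exact absurd h2 P1
      rcases Nat.eq_zero_or_pos k with rfl | hkpos
      · have := Q2 k0 hk0m hbad
        omega
      · refine ih (by omega) hkpos ?_ Q2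
        intro hmem
        rw [H.arc_split h.mem] at hmem
        rcases hmem with h1 | h1
        · have := Q2 0 (by omega) h1
          omega
        · have := hno k (by omega) h1
          omega
  set S : Set (Set X) := (fun k => H.arc H.c0 (H.f^[k] ζ)) '' {k | 0 < k ∧ k < m ∧ ζ ∈ H.arc H.c0 (H.f^[k] ζ)}
    with hS
  have hfin : S.Finite := by
    apply Set.Finite.image
    exact (Set.finite_lt_nat m).subset fun k hk => hk.2.1
  obtain ⟨A, hA⟩ := hfin.exists_maximal ⟨_, k0, ⟨hk0, hk0m, hbad⟩, rfl⟩
  obtain ⟨k, ⟨hk1, hk2, hk3⟩, rfl⟩ := hA.1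
  refine main k hk2 hk1 ?_ ?_
  · intro hmem
    have : H.f^[k] ζ ∈ H.arc ζ H.c1 := by
      rw [H.arc_split h.mem] at hmem
      rcases hmem with h1 | h1
      · have e := H.arc_anti hk3 h1 (H.right_mem _ _)
        rw [e]; exact H.left_mem _ _
      · exact h1
    have := hno k hk2 this
    omega
  · intro j hj hmem
    apply hinj j k hj hk2
    rcases Nat.eq_zero_or_pos j with rfl | hjpos
    · exact (H.arc_anti hk3 hmem (H.right_mem _ _)).symm
    · have hsub : H.arc H.c0 (H.f^[k] ζ) ⊆ H.arc H.c0 (H.f^[j] ζ) := H.sub_left hmem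
      have h2 := hA.2 ⟨j, ⟨hjpos, hj, hsub hk3⟩, rfl⟩ hsub
      have h3 : H.f^[j] ζ ∈ H.arc H.c0 (H.f^[k] ζ) := h2 (H.right_mem _ _)
      exact H.arc_anti hmem h3 (H.right_mem _ _)

theorem Zt.star' {ζ : X} {m : ℕ} (h : H.Zt ζ m) (k : ℕ) (hk : k < m) : ζ ∈ H.arc H.c1 (H.f^[k] ζ) := by
  rcases Nat.eq_zero_or_pos k with rfl | hpos
  · exact H.right_mem _ _
  · exact H.sep_symm ((H.sep_tri (y := H.f^[k] ζ) h.mem).resolve_left (h.star k hpos hk))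

/-- the basic separation property -/
theorem Zt.one {ζ v : X} {m : ℕ} (h : H.Zt ζ m) (hcl : H.Clr m ζ v) (hv : ζ ∉ H.arc H.c1 (H.f^[m] v))
    (k : ℕ) (hk : 0 < k) (hkm : k < m) : ζ ∈ H.arc H.c1 (H.f^[k] v) := by
  by_contra hcon
  rcases H.sep_tri (y := H.f^[k] v) (h.star' k hkm) with h1 | h1
  · exact hcon h1
  · have h2 := (hcl.mono hkm.le).img
    rw [← H.arc_comm, ← h2] at h1
    obtain ⟨u, hu, hue⟩ := h1
    have h3 := hcl.mem hu
    have e : H.f^[m] u = H.f^[m - k] ζ := by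
      rw [← hue, ← Function.iterate_add_apply, show m - k + k = m by omega]
    rw [e, h.fm] at h3
    exact hv (H.sub_left h3 (h.star' (m - k) (by omega)))

end HubbardTree

namespace HubbardTree
open Set

variable {X : Type*} [TopologicalSpace X] {H : HubbardTree X}

theorem trap (H : HubbardTree X) {ζ b : X} {N : ℕ} (hN : 1 ≤ N) (hcl : H.Clr N ζ b)
    (hnh : H.NH N b H.c1) (hsep : b ∈ H.arc (H.f^[N] ζ) (H.f^[N] b)) (hne : H.f^[N] b ≠ b)
    (h3 : b ∈ H.arc ζ (H.f^[N] b)) (h4 : H.f^[N] b ∈ H.arc b (H.cr (N + 1)))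
    (h5 : ∀ k < N, b ∈ H.arc (H.f^[N] b) (H.cr (k + 1))) : False := by
  have hb : ∀ k < N, H.f^[k] b ≠ H.c0 := fun k hk => hnh k hk b (H.left_mem _ _)
  -- one step of the dynamics
  have hstep : ∀ y, b ∉ H.arc (H.f^[N] b) y →
      (∀ k < N, ∀ w ∈ H.arc b y, w ≠ y → H.f^[k] w ≠ H.c0) →
      b ∉ H.arc (H.f^[N] b) (H.f^[N] y) := by
    intro y hy hc hcon
    have hby : b ∈ H.arc ζ y := (H.sep_tri (y := y) h3).resolve_right fun h => hy (H.sep_symm h)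
    have hcby : H.Clr N b y := fun k hk w hw _ h2 => hc k hk w hw h2
    have hcζ : H.Clr N ζ y := by
      intro k hk w hw h1 h2
      rw [H.arc_split hby] at hw
      rcases hw with hw | hw
      · by_cases hwb : w = b
        · rw [hwb]; exact hb k hk
        · exact hcl k hk w hw h1 hwb
      · exact hc k hk w hw h2
    rw [← hcby.img] at hcon
    rw [← hcl.img] at hsep
    obtain ⟨u, hu, hue⟩ := hcon
    obtain ⟨v, hv, hve⟩ := hsep
    have e : u = v := hcζ.injOn (H.sub_right hby hu) (H.sub_left hby hv) (hue.trans hve.symm)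
    subst e
    have e2 : u = b := H.arc_anti hby hv hu
    rw [e2] at hue
    exact hne hue
  have hNH : ∀ y, b ∉ H.arc (H.f^[N] b) y → H.NH N b y := by
    intro y hy
    by_contra hnot
    obtain ⟨p, hp, h, hh, hpc, hlt⟩ := H.first_hit_pt hnot
    have hpb : p ≠ b := by rintro rfl; exact hb h hh hpc
    have hpD : b ∉ H.arc (H.f^[N] b) p := by
      intro hcon
      rcases H.sep_tri (y := y) hcon with h1 | h1
      · exact hy h1
      · exact hpb (H.arc_anti hp (H.left_mem _ _) (H.sep_symm h1)).symm
    have h6 := hstep p hpD fun k hk w hw hwp => hlt k hk w hw hwp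
    have e : H.f^[N] p = H.cr (N - h - 1 + 1) := by
      have : N = (N - h) + h := by omega
      conv_lhs => rw [this]
      rw [Function.iterate_add_apply, hpc, H.iter_c0]
      congr 1; omega
    rw [e] at h6
    exact h6 (h5 _ (by omega))
  have hD : ∀ l, b ∉ H.arc (H.f^[N] b) (H.cr ((l + 1) * N + 1)) := by
    intro l
    induction l with
    | zero =>
      rw [zero_add, one_mul]
      intro hcon
      exact hne (H.arc_anti h4 (H.left_mem _ _) hcon).symm
    | succ l ih =>
      have h1 := hNH _ ih
      have h2 := hstep _ ih fun k hk w hw _ => h1 k hk w hw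
      rw [H.iter_cr] at h2
      rwa [show (l + 1 + 1) * N + 1 = N + ((l + 1) * N + 1) by ring]
  set S : Set X := {w | ∃ l, w ∈ H.arc b (H.cr (l * N + 1))} with hS
  have hall : ∀ l, H.NH N b (H.cr (l * N + 1)) := by
    intro l
    cases l with
    | zero => rw [zero_mul, zero_add]; exact hnh
    | succ l => exact hNH _ (hD l)
  have hinv : ∀ w ∈ S, H.f^[N] w ∈ S := by
    rintro w ⟨l, hw⟩
    have h1 := (hall l).clr.mem hw
    rw [H.iter_cr, show N + (l * N + 1) = (l + 1) * N + 1 by ring] at h1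
    rcases H.sep_tri (y := b) h1 with h2 | h2
    · exact ⟨1, by rw [one_mul]; exact H.sub_left h4 (H.sep_symm h2)⟩
    · exact ⟨l + 1, h2⟩
  have hS0 := H.invariant_nh hN hinv (by rintro k hk w ⟨l, hw⟩; exact hall l k hk w hw)
  have hc1 : H.c1 ≠ H.cr (N + 1) := by
    intro e
    have h1 := hD 0
    rw [zero_add, one_mul, ← e] at h1
    exact h1 (h5 0 (by omega))
  obtain ⟨n, hn⟩ := H.expans hc1 (H.marked_cr 1) (H.marked_cr (N + 1))
  apply hn
  intro k _ w hw
  apply hS0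
  rcases H.sep_tri (y := b) hw with h1 | h1
  · exact ⟨0, by rw [zero_mul, zero_add]; exact H.sep_symm h1⟩
  · exact ⟨1, by rw [one_mul]; exact h1⟩

/-- from the fixed median to a characteristic point -/
theorem Zt.chr {ζ x : X} {m : ℕ} (h : H.Zt ζ m) (hY : ζ ∉ H.arc H.c1 (H.cr (m + 1)))
    (x1 : x ∈ H.arc ζ H.c1) (x2 : x ∈ H.arc H.c1 (H.cr (m + 1))) (x3 : x ∈ H.arc ζ (H.cr (m + 1)))
    (hx : H.f^[m] x = x) : H.Chr x m ∧ H.NH m x H.c1 := by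
  have hxζ : x ≠ ζ := by rintro rfl; exact hY x2
  have hm := h.pos
  have hx1 : x ≠ H.c1 := by
    rintro rfl
    exact h.ne1 (h.clr.injOn (H.left_mem _ _) (H.right_mem _ _) (h.fm.trans hx.symm))
  have hxm : x ≠ H.cr (m + 1) := by
    intro e
    apply hx1
    apply h.clr.injOn x1 (H.right_mem _ _)
    rw [hx, H.iter_c1, e]
  have hbr : IsBranchPt x := H.isBranch_of hxζ.symm hx1.symm hxm.symm x1 x3 x2
  have hYx : ζ ∉ H.arc H.c1 x := fun hc => hY (H.sub_left x2 hc)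
  have hclx : H.Clr m ζ x := fun k hk w hw h1 _ => h.nh w (H.sub_left x1 hw) h1 k hk
  have hsep : ∀ k, 0 < k → k < m → ζ ∈ H.arc H.c1 (H.f^[k] x) := fun k h1 h2 =>
    h.one hclx (by rw [hx]; exact hYx) k h1 h2
  refine ⟨⟨hbr, hx1, H.sub_right h.mem x1, ?_, hm, hx, ?_⟩, h.sub_nh x1 hxζ⟩
  · intro k
    have e : H.f^[k] x = H.f^[k % m] x := by
      conv_lhs => rw [← Nat.mod_add_div k m]
      rw [Function.iterate_add_apply, Function.iterate_mul, Function.iterate_fixed hx]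
    rw [e]
    rcases Nat.eq_zero_or_pos (k % m) with h0 | h0
    · left; rw [h0]; rfl
    · right
      have h1 := hsep _ h0 (Nat.mod_lt _ hm)
      intro hcon
      rcases H.sep_tri (y := ζ) hcon with h2 | h2
      · exact hxζ (H.arc_anti h.mem h2 x1)
      · exact hxζ (H.arc_anti h1 (H.sep_symm x1) h2)
  · intro k h1 h2 e
    have := hsep k h1 h2
    rw [e] at this
    exact hYx this

theorem Zt.caseI {ζ x : X} {m : ℕ} (h : H.Zt ζ m) (hnh : H.NH m H.c1 (H.cr (m + 1)))
    (hY : ζ ∉ H.arc H.c1 (H.cr (m + 1)))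
    (x1 : x ∈ H.arc ζ H.c1) (x2 : x ∈ H.arc H.c1 (H.cr (m + 1))) (x3 : x ∈ H.arc ζ (H.cr (m + 1))) :
    H.f^[m] x = x := by
  by_contra hne
  have hm := h.pos
  have hxζ : x ≠ ζ := by rintro rfl; exact hY x2
  have hc1m : H.c1 ≠ H.cr (m + 1) := by
    intro e
    apply h.ne1
    apply h.clr.injOn (H.left_mem _ _) (H.right_mem _ _)
    rw [h.fm, H.iter_c1, e]
  have hx1 : x ≠ H.c1 := by
    rintro rfl
    rcases H.c1_end x3 with e | e
    · exact h.ne1 e.symm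
    · exact hc1m e
  have hmk : IsBranchPt x ∨ ∃ k : ℕ, H.f^[k] H.c0 = x := by
    by_cases hxm : x = H.cr (m + 1)
    · rw [hxm]; exact H.marked_cr _
    · exact Or.inl (H.isBranch_of hxζ.symm hx1.symm (Ne.symm hxm) x1 x3 x2)
  have hclx : H.Clr m ζ x := fun k hk w hw h1 _ => h.nh w (H.sub_left x1 hw) h1 k hk
  have hnx := h.sub_nh x1 hxζ
  have hF := h.clr.mem x1
  rw [h.fm, H.iter_c1] at hF
  have hone : ∀ k, 0 < k → k < m → ζ ∈ H.arc H.c1 (H.cr (k + 1)) := by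
    intro k h1 h2
    have := h.one h.clr (by rw [H.iter_c1]; exact hY) k h1 h2
    rwa [H.iter_c1] at this
  rw [H.arc_split x2] at hF
  rcases hF with hF | hF
  swap
  · -- option 2
    have y1 : x ∈ H.arc H.c1 (H.f^[m] x) := H.chain x2 hF
    have y3 : x ∈ H.arc ζ (H.f^[m] x) := H.chain x3 hF
    have hζ : ζ ∉ H.arc H.c1 (H.f^[m] x) := fun hc => hY (H.sub_left (H.sub_right x2 hF) hc)
    refine H.trap hm hclx hnx (by rw [h.fm]; exact y1) hne y3 hF ?_
    intro k hk
    rcases Nat.eq_zero_or_pos k with rfl | hk0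
    · exact H.sep_symm y1
    · have h1 := (H.sep_tri (y := H.f^[m] x) (hone k hk0 hk)).resolve_left hζ
      exact H.sub_left h1 (H.sep_symm y3)
  · -- option 3
    set a := H.f^[m] x with ha
    have a1 : a ∈ H.arc x H.c1 := H.sep_symm hF
    have hFa := hnx.clr.mem a1
    rw [H.iter_c1, ← ha] at hFa
    have hnm : H.NH m x (H.cr (m + 1)) := hnh.sub x2 (H.right_mem _ _)
    have xa : x ∈ H.arc a (H.cr (m + 1)) := by
      have h1 := x2
      rcases H.sep_tri (y := a) h1 with h2 | h2
      · exact absurd (H.arc_anti a1 (H.left_mem _ _) (H.sep_symm h2)).symm hne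
      · exact h2
    have hnxa : H.NH m x a := hnx.sub (H.left_mem _ _) a1
    rw [H.arc_split xa] at hFa
    rcases hFa with hFa | hFa
    · obtain ⟨n, hn⟩ := H.expans (x := x) (y := a) (Ne.symm hne) hmk (by
        rcases hmk with hb | ⟨k, hk⟩
        · exact Or.inl (H.branch_iter hb m)
        · exact Or.inr ⟨m + k, by rw [Function.iterate_add_apply, hk]⟩)
      exact hn (H.invariant_arc hm hnxa (H.right_mem _ _) (H.sep_symm hFa) n)
    · by_cases hFx : H.f^[m] a = x
      · obtain ⟨n, hn⟩ := H.expans (x := x) (y := a) (Ne.symm hne) hmk (by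
          rcases hmk with hb | ⟨k, hk⟩
          · exact Or.inl (H.branch_iter hb m)
          · exact Or.inr ⟨m + k, by rw [Function.iterate_add_apply, hk]⟩)
        exact hn (H.invariant_arc hm hnxa (H.right_mem _ _) (by rw [hFx]; exact H.left_mem _ _) n)
      have e2 : H.f^[2 * m] a = H.f^[m] (H.f^[m] a) := by rw [two_mul, Function.iterate_add_apply]
      have ecr : H.f^[m] (H.cr (m + 1)) = H.cr (2 * m + 1) := by
        rw [H.iter_cr]; congr 1; ring
      have g1 := hnm.clr.mem hFa
      rw [ecr, ← ha, ← e2] at g1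
      -- g1 : G a ∈ arc a c_{2m+1}
      have hclm : H.Clr m ζ (H.cr (m + 1)) := by
        intro k hk w hw h1 _
        rw [H.arc_split x3] at hw
        rcases hw with hw | hw
        · exact h.nh w (H.sub_left x1 hw) h1 k hk
        · exact hnm k hk w hw
      have k1 := hclm.mem x3
      rw [h.fm, ecr, ← ha] at k1
      have k2 := hnh.clr.mem x2
      rw [H.iter_c1, ecr, ← ha] at k2
      have g2 : a ∈ H.arc H.c1 (H.f^[2 * m] a) := H.chain k1 g1
      have g3 : a ∈ H.arc (H.cr (m + 1)) (H.f^[2 * m] a) := H.chain k2 g1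
      have hGa : H.f^[2 * m] a ≠ a := by
        rw [e2]
        intro e
        exact hFx (hnm.clr.injOn hFa (H.left_mem _ _) (e.trans ha))
      have xca : a ≠ x := hne
      have axc : a ∈ H.arc x (H.cr (2 * m + 1)) := H.sep_along k2 xa (H.right_mem _ _)
      have xζa : x ∈ H.arc ζ a := H.chain x1 a1
      have z1 : ζ ∉ H.arc a (H.cr (2 * m + 1)) := by
        intro hc
        exact xca (H.arc_anti axc (H.left_mem _ _) (H.sub_left hc (H.sep_symm xζa))).symm
      have z2 : ζ ∉ H.arc H.c1 (H.cr (2 * m + 1)) := by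
        intro hc
        rw [H.arc_split k1] at hc
        rcases hc with hc | hc
        · exact hY (H.sub_left x2 (H.sub_left hF hc))
        · exact z1 hc
      have z3 : ζ ∉ H.arc H.c1 (H.f^[2 * m] a) := fun hc => z2 (H.sub_left (H.sub_right k1 g1) hc)
      have g4 : a ∈ H.arc ζ (H.cr (2 * m + 1)) := by
        rcases H.sep_tri (y := ζ) axc with h1 | h1
        · exact absurd (H.arc_anti x1 (H.sep_symm h1) a1) xca
        · exact h1
      have g5 : a ∈ H.arc ζ (H.f^[2 * m] a) := H.chain g4 g1
      have aζ : a ∈ H.arc ζ H.c1 := H.sub_right x1 a1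
      have q1 : H.Clr (2 * m) ζ a := by
        rw [two_mul]
        apply Clr.add (fun k hk w hw h1 _ => h.nh w (H.sub_left aζ hw) h1 k hk)
        rw [h.fm]
        exact (hnh.sub (H.left_mem _ _) (H.sub_right x2 hFa)).clr
      have q2 : H.NH (2 * m) a H.c1 := by
        rw [two_mul]
        apply NH.add (hnx.sub a1 (H.right_mem _ _))
        rw [H.iter_c1]
        exact hnh.sub (H.sub_right x2 hFa) (H.right_mem _ _)
      have q3 : H.f^[2 * m] ζ = H.cr (m + 1) := by
        rw [two_mul, Function.iterate_add_apply, h.fm, H.iter_c1]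
      refine H.trap (by omega) q1 q2 (by rw [q3]; exact g3) hGa g5 g1 ?_
      intro k hk
      have hfin : ζ ∈ H.arc H.c1 (H.cr (k + 1)) → a ∈ H.arc (H.f^[2 * m] a) (H.cr (k + 1)) := by
        intro h1
        have h2 := (H.sep_tri (y := H.f^[2 * m] a) h1).resolve_left z3
        exact H.sub_left h2 (H.sep_symm g5)
      rcases Nat.eq_zero_or_pos k with rfl | hk0
      · exact H.sep_symm g2
      rcases lt_trichotomy k m with hkm | rfl | hkm
      · exact hfin (hone k hk0 hkm)
      · exact H.sep_symm g3
      · apply hfin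
        have h1 := h.one hclm (by rw [ecr]; exact z2) (k - m) (by omega) (by omega)
        rwa [H.iter_cr, show k - m + (m + 1) = k + 1 by omega] at h1

theorem caseII_pt (H : HubbardTree X) {m r : ℕ} (hm : 1 ≤ m)
    (hR : rho H.kneading m = ((m + r : ℕ) : ℕ∞)) (hr : 1 ≤ r) (hrm : r < m)
    (ho : ¬ RhoOrbit H.kneading r m) (hc : ∀ j, 1 ≤ j → j ≤ m → H.cr j ≠ H.c0) :
    ∃ p ∈ H.arc H.c1 (H.cr (m + 1)), ∃ s, 1 ≤ s ∧ s < m ∧ H.f^[s - 1] p = H.c0 ∧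
      ∀ k < m, ∀ w ∈ H.arc H.c1 p, w ≠ p → H.f^[k] w ≠ H.c0 := by
  have main : ∀ d s, d + s = m → 1 ≤ s → s < m → ¬ RhoOrbit H.kneading s m →
      (∃ p ∈ H.arc H.c1 (H.cr (m + 1)), p ≠ H.c1 ∧ H.f^[s - 1] p = H.c0 ∧
        ∀ k < s, ∀ w ∈ H.arc H.c1 p, w ≠ p → H.f^[k] w ≠ H.c0) →
      ∃ p ∈ H.arc H.c1 (H.cr (m + 1)), ∃ s, 1 ≤ s ∧ s < m ∧ H.f^[s - 1] p = H.c0 ∧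
      ∀ k < m, ∀ w ∈ H.arc H.c1 p, w ≠ p → H.f^[k] w ≠ H.c0 := by
    intro d
    induction d using Nat.strong_induction_on with
    | _ d ih =>
    intro s hds hs hsm hos ⟨p, hp, hp1, hps, hpn⟩
    have hcl : H.Clr s H.c1 p := fun k hk w hw _ h2 => hpn k hk w hw h2
    have hfp : H.f^[s] p = H.c1 := by
      have e : s = (s - 1) + 1 := by omega
      rw [e, Function.iterate_succ_apply', hps]; rfl
    have hsplit : ∀ k, s ≤ k → ∀ w, H.f^[k] w = H.f^[k - s] (H.f^[s] w) := by
      intro k hk w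
      rw [← Function.iterate_add_apply, Nat.sub_add_cancel hk]
    have hmem : ∀ w ∈ H.arc H.c1 p, H.f^[s] w ∈ H.arc (H.cr (s + 1)) H.c1 := by
      intro w hw
      have := hcl.mem hw
      rwa [H.iter_c1, hfp] at this
    by_cases hnh : H.NH (m - s) (H.cr (s + 1)) H.c1
    · refine ⟨p, hp, s, hs, hsm, hps, ?_⟩
      intro k hk w hw hwp
      rcases Nat.lt_or_ge k s with hks | hks
      · exact hpn k hks w hw hwp
      · rw [hsplit k hks]
        exact hnh _ (by omega) _ (hmem w hw)
    · obtain ⟨k, hk, hnk, q, hq, hqc, hqu, -, -⟩ := H.first_hit_time hnh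
      have hne : H.cr (s + 1) ≠ H.c1 := by
        intro e
        apply hp1
        apply hcl.injOn (H.right_mem _ _) (H.left_mem _ _)
        rw [hfp, H.iter_c1, e]
      have hrho : rho H.kneading s = ((s + k + 1 : ℕ) : ℕ∞) := by
        apply rho_eq (by omega)
        · have h1 := H.hit_sym hne hnk hq hqc
          rw [H.iter_cr, H.iter_c1] at h1
          rw [H.kneading_eq (by omega), H.kneading_eq (by omega)]
          rwa [show s + k + 1 - s = k + 1 by omega, show s + k + 1 = k + (s + 1) by omega]
        · intro j hj1 hj2
          have h1 := NH.sym H hnk (k := j - s - 1) (by omega)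
          rw [H.iter_cr, H.iter_c1] at h1
          rw [H.kneading_eq (by omega), H.kneading_eq (by omega)]
          rwa [show j - s - 1 + (s + 1) = j by omega, show j - s - 1 + 1 = j - s by omega] at h1
      have hos' : ¬ RhoOrbit H.kneading (s + k + 1) m := fun h => hos (RhoOrbit.head hrho h)
      have hlt : s + k + 1 < m := by
        rcases Nat.lt_or_ge (s + k + 1) m with h | h
        · exact h
        · have e : s + k + 1 = m := by omega
          rw [e] at hos'
          exact absurd (RhoOrbit.refl m) hos'
      have hqs : q ≠ H.cr (s + 1) := by
        rintro rfl
        rw [H.iter_cr] at hqc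
        exact hc _ (by omega) (by omega) hqc
      have hi := hcl.img
      rw [H.iter_c1, hfp] at hi
      obtain ⟨p', hp', hpq⟩ : q ∈ H.f^[s] '' H.arc H.c1 p := by rw [hi]; exact hq
      refine ih (m - (s + k + 1)) (by omega) (s + k + 1) (by omega) (by omega) hlt hos'
        ⟨p', H.sub_left hp hp', ?_, ?_, ?_⟩
      · rintro rfl
        rw [H.iter_c1] at hpq
        exact hqs hpq.symm
      · rw [hsplit _ (by omega), hpq, show s + k + 1 - 1 - s = k by omega, hqc]
      · intro i hi' w hw hwp
        have hw' := H.sub_left hp' hw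
        rcases Nat.lt_or_ge i s with his | his
        · refine hpn i his w hw' ?_
          rintro rfl
          exact hwp (H.arc_anti hp' hw (H.right_mem _ _))
        · rw [hsplit i his]
          rcases Nat.lt_or_ge (i - s) k with h1 | h1
          · exact hnk _ h1 _ (hmem w hw')
          · rw [show i - s = k by omega]
            intro hcon
            have := hqu _ (hmem w hw') hcon
            rw [← hpq] at this
            exact hwp (hcl.injOn hw' hp' this)
  refine main (m - r) r (by omega) hr hrm ho ?_
  obtain ⟨p, hp, hpc, hpu, hnh⟩ := H.rho_hit hm hR fun j a b => hc j a (by omega)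
  rw [show m + r - m - 1 = r - 1 by omega] at hpc hpu hnh
  refine ⟨p, hp, ?_, hpc, ?_⟩
  · rintro rfl
    rw [H.iter_c1] at hpc
    exact hc _ (by omega) (by omega) hpc
  · intro k hk w hw hwp
    have hw' := H.sub_left hp hw
    rcases Nat.lt_or_ge k (r - 1) with h1 | h1
    · exact hnh k h1 w hw'
    · obtain rfl : k = r - 1 := by omega
      exact fun hcon => hwp (hpu w hw' hcon)

theorem Zt.caseII {ζ p : X} {m s : ℕ} (h : H.Zt ζ m) (hp : p ∈ H.arc H.c1 (H.cr (m + 1)))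
    (hs : 1 ≤ s) (hsm : s < m) (hps : H.f^[s - 1] p = H.c0)
    (hpn : ∀ k < m, ∀ w ∈ H.arc H.c1 p, w ≠ p → H.f^[k] w ≠ H.c0) :
    ζ ∉ H.arc H.c1 (H.cr (m + 1)) ∧ ∀ x ∈ H.arc ζ H.c1, x ∈ H.arc H.c1 (H.cr (m + 1)) →
      x ∈ H.arc ζ (H.cr (m + 1)) → H.f^[m] x = x := by
  have hpζ : p ≠ ζ := by rintro rfl; exact h.first _ (by omega) hps
  have hpζ1 : p ∉ H.arc ζ H.c1 := fun hc => h.nh p hc hpζ (s - 1) (by omega) hps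
  have hY : ζ ∉ H.arc H.c1 (H.cr (m + 1)) := by
    intro hc
    rcases H.arc_total hc hp with h1 | h1
    · exact hpζ1 (H.sep_symm h1)
    · exact hpn (m - 1) (by omega) ζ h1 hpζ.symm h.hit
  refine ⟨hY, ?_⟩
  intro x x1 x2 x3
  have hxζ : x ≠ ζ := by rintro rfl; exact hY x2
  have hnx := h.sub_nh x1 hxζ
  have hpx : p ∈ H.arc x (H.cr (m + 1)) := by
    have h1 := hp
    rw [H.arc_split x2] at h1
    rcases h1 with h1 | h1
    · exact absurd (H.sub_right x1 (H.sep_symm h1)) hpζ1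
    · exact h1
  have y1 : x ∈ H.arc H.c1 p := H.chain x2 hpx
  have y3 : x ∈ H.arc ζ p := H.chain x3 hpx
  have c1p : H.Clr m H.c1 p := fun k hk w hw _ h2 => hpn k hk w hw h2
  have cζp : H.Clr m ζ p := by
    intro k hk w hw h1 h2
    rw [H.arc_split y3] at hw
    rcases hw with hw | hw
    · exact h.nh w (H.sub_left x1 hw) h1 k hk
    · exact hpn k hk w (H.sub_right y1 hw) h2
  have efp : H.f^[m] p = H.cr (m - s + 1) := by
    have e : m = (m - s + 1) + (s - 1) := by omega
    conv_lhs => rw [e]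
    rw [Function.iterate_add_apply, hps, H.iter_c0]
  have F1 := h.clr.mem x1
  have F2 := c1p.mem y1
  have F3 := cζp.mem y3
  rw [h.fm, H.iter_c1] at F1
  rw [H.iter_c1, efp] at F2
  rw [h.fm, efp] at F3
  have h1 := h.one h.clr (by rw [H.iter_c1]; exact hY) (m - s) (by omega) (by omega)
  rw [H.iter_c1] at h1
  have h2 := (H.sep_tri (y := H.cr (m + 1)) h1).resolve_left hY
  exact H.median_unique F1 F2 F3 x2 (H.sub_left h2 (H.sep_symm x3)) (H.sub_left h1 (H.sep_symm x1))

theorem part2 (H : HubbardTree X) {m R r : ℕ} (hI : RhoOrbit H.kneading 1 m)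
    (hR : rho H.kneading m = (R : ℕ∞)) (hr : 1 ≤ r) (hrm : r ≤ m) (hmod : r ≡ R [MOD m])
    (hq : 3 ≤ qArms H.kneading m R r) (hne : ¬ ExactPeriod H.f H.c0 m) :
    ∃ z : X, IsBranchPt z ∧ H.IsCharacteristic z ∧ ExactPeriod H.f z m ∧
        ArmsTransitive H.f m z ∧ (arms z).ncard = qArms H.kneading m R r := by
  have hc := H.cr_ne hI hR hne
  obtain ⟨ζ, h⟩ := H.exists_Zt hI hc
  have hm := h.pos
  have hmR := (rho_spec hR).1
  suffices hs : ζ ∉ H.arc H.c1 (H.cr (m + 1)) ∧ ∀ x ∈ H.arc ζ H.c1,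
      x ∈ H.arc H.c1 (H.cr (m + 1)) → x ∈ H.arc ζ (H.cr (m + 1)) → H.f^[m] x = x by
    obtain ⟨x, x1, x2, x3, -⟩ := H.exists_median ζ H.c1 (H.cr (m + 1))
    obtain ⟨hch, hnh⟩ := h.chr hs.1 x1 x2 x3 (hs.2 x x1 x2 x3)
    exact hch.finish hnh hI hR hr hrm hmod
  obtain ⟨a, ha⟩ : ∃ a, R = r + m * a := by
    obtain ⟨a, ha⟩ := (Nat.modEq_iff_dvd' (by omega : r ≤ R)).1 hmod
    exact ⟨a, by omega⟩
  have hdiv : (R - r) / m = a := by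
    rw [ha, Nat.add_sub_cancel_left, Nat.mul_div_cancel_left a (by omega)]
  by_cases ha2 : 2 ≤ a
  · have h2 : m * 2 ≤ m * a := Nat.mul_le_mul_left _ ha2
    have hnh : H.NH m H.c1 (H.cr (m + 1)) := H.rho_nh hm hR (by omega) hc
    have hY : ζ ∉ H.arc H.c1 (H.cr (m + 1)) := fun hcon => hnh (m - 1) (by omega) ζ hcon h.hit
    exact ⟨hY, fun x x1 x2 x3 => h.caseI hnh hY x1 x2 x3⟩
  · unfold qArms at hq
    rw [hdiv] at hq
    split_ifs at hq with ho
    · omega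
    · have ha1 : a = 1 := by omega
      subst ha1
      have hrlt : r < m := by
        rcases Nat.lt_or_ge r m with h1 | h1
        · exact h1
        · have e : r = m := by omega
          rw [e] at ho
          exact absurd (RhoOrbit.refl m) ho
      have hR' : rho H.kneading m = ((m + r : ℕ) : ℕ∞) := by
        rw [hR, ha]; congr 1; ring
      obtain ⟨p, hp, s, hs1, hs2, hps, hpn⟩ := H.caseII_pt hm hR' hr hrlt ho hc
      exact h.caseII hp hs1 hs2 hps hpn

end HubbardTree

/-- Proposition 5.18, "Number of Arms at Tame Branch Points".
If `z` is a tame characteristic branch point of exact period `m`, then `m` occurs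
in the internal address of the kneading sequence `ν` and the number of arms of `z`
is `q(m)`. Conversely, for any entry `m` of the internal address with `q(m) ≥ 3`,
provided the critical orbit is not periodic of period `m`, the Hubbard tree
contains a tame branch point of exact period `m` with `q(m)` arms. -/
theorem number_of_arms_at_tame_branch_points
    {X : Type*} [TopologicalSpace X] (H : HubbardTree X) (m : ℕ) :
    (∀ z : X, IsBranchPt z → H.IsCharacteristic z → ExactPeriod H.f z m →
      ArmsTransitive H.f m z →
      InternalAddress H.kneading m ∧
      ∀ R r : ℕ, rho H.kneading m = (R : ℕ∞) → 1 ≤ r → r ≤ m → r ≡ R [MOD m] →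
        (arms z).ncard = qArms H.kneading m R r) ∧
    (∀ R r : ℕ, InternalAddress H.kneading m → rho H.kneading m = (R : ℕ∞) →
      1 ≤ r → r ≤ m → r ≡ R [MOD m] → 3 ≤ qArms H.kneading m R r →
      ¬ ExactPeriod H.f H.c0 m →
      ∃ z : X, IsBranchPt z ∧ H.IsCharacteristic z ∧ ExactPeriod H.f z m ∧
        ArmsTransitive H.f m z ∧ (arms z).ncard = qArms H.kneading m R r) := by
  exact ⟨fun z hb hc hp ht => H.part1 hb hc hp ht,
    fun R r hI hR hr hrm hmod hq hne => H.part2 hI hR hr hrm hmod hq hne⟩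

end HubbardTrees
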